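/- arXiv:1405.0993 — 3 statements merged into one kernel-verified Lean document; each statement's English description precedes it below -/
import Mathlib

section
/- Let R be a commutative ring and n, d ∈ ℕ with n, d ≥ 1, and let X be an (n+d)×(n+1) matrix over R. Then ν^d(μ(X)) is a square matrix of order C(n+d, n), and det(ν^d(μ(X))) = (μ'(X))^n. -/
/-!
A row of `X` is a hyperplane, and a row of `μ X` is the common point of `n` of these hyperplanes.
Let `ℓ` be the linear form whose coefficients are row `0` of `X` with alternating signs, so that its
value at such a point is the maximal minor obtained by putting row `0` on top.  In the Veronese
matrix, replacing each column of a monomial `x₀ * g` by the values of `ℓ * g` is a triangular change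
of columns whose determinant is a power of `X 0 0`, and the new columns vanish at the points with
`ℓ = 0`.  What remains is block triangular.  One block is the Veronese matrix of degree `d - 1` for
`X` without row `0`, each row being scaled by a maximal minor of `X`.  The other is the Veronese
matrix of the points on `ℓ = 0`, which by Chiò's identity is, up to powers of `X 0 0`, the one for
`n - 1` and the condensed matrix.  Rows and columns are split into initial and final segments of
their orders, so no sign appears.  The powers of `X 0 0` can be cancelled because adding a
polynomial variable to this entry, later specialised to `0`, makes it a non-zero-divisor.
-/

instance (priority := high) (m : ℕ) : WellFoundedLT (Fin m) := inferInstance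

/-- The index type for monomials of total degree `d` in the `n + 1` variables
`X 0, …, X n`: exponent vectors summing to `d`. -/
def MonIdx (n d : ℕ) : Type := {f : Fin (n + 1) → ℕ // ∑ i, f i = d}

instance (n d : ℕ) : DecidableEq (MonIdx n d) :=
  inferInstanceAs (DecidableEq {f : Fin (n + 1) → ℕ // ∑ i, f i = d})

instance (n d : ℕ) : Fintype (MonIdx n d) :=
  Fintype.subtype (Finset.Nat.antidiagonalTuple (n + 1) d) fun _ =>
    Finset.Nat.mem_antidiagonalTuple

/-- Monomials of total degree `d` are ordered by *inverting* the lexicographic order on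
their exponent sequences, so that `X 0 ^ d` comes first. -/
noncomputable instance (n d : ℕ) : LinearOrder (MonIdx n d) :=
  LinearOrder.lift'
    (fun f : {f : Fin (n + 1) → ℕ // ∑ i, f i = d} => OrderDual.toDual (toLex f.1))
    (fun f g h => Subtype.ext (by simpa using h))

/-- The index type for the rows of `μ X`: subsets of `Fin m` of cardinality `n`,
ordered by the lexicographic order on the increasing sequences of *omitted* rows
(equivalently, lexicographically by indicator functions). -/
def OmitIdx (m n : ℕ) : Type := {s : Finset (Fin m) // s.card = n}

instance (m n : ℕ) : DecidableEq (OmitIdx m n) :=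
  inferInstanceAs (DecidableEq {s : Finset (Fin m) // s.card = n})

instance (m n : ℕ) : Fintype (OmitIdx m n) :=
  inferInstanceAs (Fintype {s : Finset (Fin m) // s.card = n})

noncomputable instance (m n : ℕ) : LinearOrder (OmitIdx m n) :=
  LinearOrder.lift'
    (fun s : {s : Finset (Fin m) // s.card = n} => toLex fun i : Fin m => decide (i ∈ s.1))
    (fun s t h => Subtype.ext (Finset.ext fun i => by
      have h' := congrFun ((toLex (α := Fin m → Bool)).injective h) i
      simpa [decide_eq_decide] using h'))

/-- The Veronese map `ν^d : R^{n+1} → R^{C(n+d,n)}`, sending a vector to the values at it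
of all monomials of total degree `d`. -/
def nu {R : Type*} [CommRing R] {n : ℕ} (d : ℕ) (x : Fin (n + 1) → R) (f : MonIdx n d) : R :=
  ∏ i, x i ^ f.1 i

/-- `μ X` : the `C(m,n) × (n+1)` matrix of all `n × n` minors of `X`.  The `(s, j)` entry is
the determinant of the submatrix of `X` with rows the elements of `s` (in increasing order)
and all columns except column `j` (in increasing order). -/
def mu {R : Type*} [CommRing R] {m n : ℕ} (X : Matrix (Fin m) (Fin (n + 1)) R) :
    Matrix (OmitIdx m n) (Fin (n + 1)) R := fun s j =>
  Matrix.det (Matrix.of fun a b : Fin n =>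
    X (s.1.orderIsoOfFin s.2 a) (j.succAbove b))

/-- `μ' X` : the product of all `(n+1) × (n+1)` minors of `X`. -/
def mu' {R : Type*} [CommRing R] {m n : ℕ} (X : Matrix (Fin m) (Fin (n + 1)) R) : R :=
  ∏ t : {t : Finset (Fin m) // t.card = n + 1},
    Matrix.det (Matrix.of fun a b : Fin (n + 1) => X (t.1.orderIsoOfFin t.2 a) b)

namespace MultivariateVandermonde

variable {α β γ : Type*} [Preorder γ]

theorem strictMono_sumElim_ofLex [Preorder α] [Preorder β] {f : α → γ} {g : β → γ}
    (hf : StrictMono f) (hg : StrictMono g) (hfg : ∀ a b, f a < g b) :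
    StrictMono fun x : α ⊕ₗ β => Sum.elim f g (ofLex x) := by
  rintro (a | a) (b | b) h
  · exact hf (Sum.Lex.inl_lt_inl_iff.1 h)
  · exact hfg a b
  · exact absurd h Sum.Lex.not_inr_lt_inl
  · exact hg (Sum.Lex.inr_lt_inr_iff.1 h)

/-- The order isomorphism from the lexicographic sum of two finite linear orders onto a third order,
given by strictly monotone maps whose images are stacked and whose cardinalities add up. -/
noncomputable def sumLexOrderIso [LinearOrder α] [LinearOrder β] [Fintype α] [Fintype β]
    [Fintype γ] (f : α → γ) (g : β → γ) (hf : StrictMono f) (hg : StrictMono g)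
    (hfg : ∀ a b, f a < g b) (hcard : Fintype.card α + Fintype.card β = Fintype.card γ) :
    α ⊕ₗ β ≃o γ :=
  have mono := strictMono_sumElim_ofLex hf hg hfg
  mono.orderIsoOfSurjective _ <| Function.Bijective.surjective <|
    (Fintype.bijective_iff_injective_and_card _).2
      ⟨mono.injective, (Fintype.card_lex _).trans (Fintype.card_sum.trans hcard)⟩

end MultivariateVandermonde

namespace OmitIdx

variable {m k : ℕ}

theorem card_eq_choose (m k : ℕ) : Fintype.card (OmitIdx m k) = m.choose k :=
  (Fintype.card_finset_len k).trans (by rw [Fintype.card_fin])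

theorem lt_iff {s t : OmitIdx m k} :
    s < t ↔ ∃ i, (∀ j < i, (j ∈ s.1 ↔ j ∈ t.1)) ∧ i ∉ s.1 ∧ i ∈ t.1 := by
  change (∃ i, (∀ j < i, decide (j ∈ s.1) = decide (j ∈ t.1)) ∧
    decide (i ∈ s.1) < decide (i ∈ t.1)) ↔ _
  simp only [decide_eq_decide, Bool.lt_iff, decide_eq_false_iff_not, decide_eq_true_eq]

theorem lt_of_succ_mem_iff {s t : OmitIdx m k} {l : ℕ} {s' t' : OmitIdx (m + 1) l}
    (h₀ : 0 ∈ s'.1 ↔ 0 ∈ t'.1) (hs : ∀ i : Fin m, i.succ ∈ s'.1 ↔ i ∈ s.1)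
    (ht : ∀ i : Fin m, i.succ ∈ t'.1 ↔ i ∈ t.1) (h : s < t) : s' < t' := by
  obtain ⟨i, hlt, his, hit⟩ := lt_iff.1 h
  refine lt_iff.2 ⟨i.succ, fun j hj => ?_, mt (hs i).1 his, (ht i).2 hit⟩
  cases j using Fin.cases with
  | zero => exact h₀
  | succ j => rw [hs, ht, hlt j (Fin.succ_lt_succ_iff.1 hj)]

/-- The increasing enumeration of the elements of `s`. -/
def emb (s : OmitIdx m k) : Fin k ↪o Fin m := s.1.orderEmbOfFin s.2

theorem emb_mem (s : OmitIdx m k) (a : Fin k) : s.emb a ∈ s.1 :=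
  Finset.orderEmbOfFin_mem s.1 s.2 a

theorem emb_eq_of_strictMono (s : OmitIdx m k) {f : Fin k → Fin m} (hmem : ∀ a, f a ∈ s.1)
    (hf : StrictMono f) : ⇑s.emb = f :=
  (Finset.orderEmbOfFin_unique s.2 hmem hf).symm

/-- The subset `{i + 1 | i ∈ s}` of `Fin (m + 1)`, which avoids `0`. -/
def skipZero (s : OmitIdx m k) : OmitIdx (m + 1) k :=
  ⟨s.1.map (Fin.succEmb m), (Finset.card_map _).trans s.2⟩

/-- The subset `{0} ∪ {i + 1 | i ∈ s}` of `Fin (m + 1)`. -/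
def takeZero (s : OmitIdx m k) : OmitIdx (m + 1) (k + 1) :=
  ⟨Finset.cons 0 (s.1.map (Fin.succEmb m)) (by simp), by simpa using s.2⟩

@[simp] theorem zero_notMem_skipZero (s : OmitIdx m k) : 0 ∉ s.skipZero.1 := by
  simp [skipZero]

@[simp] theorem succ_mem_skipZero (s : OmitIdx m k) (i : Fin m) :
    i.succ ∈ s.skipZero.1 ↔ i ∈ s.1 := by
  simp [skipZero]

@[simp] theorem zero_mem_takeZero (s : OmitIdx m k) : 0 ∈ s.takeZero.1 := by
  simp [takeZero]

@[simp] theorem succ_mem_takeZero (s : OmitIdx m k) (i : Fin m) :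
    i.succ ∈ s.takeZero.1 ↔ i ∈ s.1 := by
  simp [takeZero]

theorem strictMono_skipZero : StrictMono (skipZero : OmitIdx m k → OmitIdx (m + 1) k) :=
  fun s t => lt_of_succ_mem_iff (by simp) s.succ_mem_skipZero t.succ_mem_skipZero

theorem strictMono_takeZero : StrictMono (takeZero : OmitIdx m k → OmitIdx (m + 1) (k + 1)) :=
  fun s t => lt_of_succ_mem_iff (by simp) s.succ_mem_takeZero t.succ_mem_takeZero

theorem skipZero_lt_takeZero (s : OmitIdx m (k + 1)) (t : OmitIdx m k) :
    s.skipZero < t.takeZero :=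
  lt_iff.2 ⟨0, by simp, s.zero_notMem_skipZero, t.zero_mem_takeZero⟩

theorem emb_skipZero (s : OmitIdx m k) : ⇑s.skipZero.emb = Fin.succ ∘ s.emb :=
  emb_eq_of_strictMono _ (fun a => (s.succ_mem_skipZero _).2 (s.emb_mem a))
    (Fin.strictMono_succ.comp s.emb.strictMono)

theorem emb_takeZero (s : OmitIdx m k) :
    ⇑s.takeZero.emb = (Fin.cons 0 (Fin.succ ∘ s.emb) : Fin (k + 1) → Fin (m + 1)) := by
  refine emb_eq_of_strictMono _ (fun a => ?_)
    (Fin.strictMono_cons.2 ⟨fun _ => Fin.succ_pos _, Fin.strictMono_succ.comp s.emb.strictMono⟩)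
  cases a using Fin.cases with
  | zero => exact s.zero_mem_takeZero
  | succ a => exact (s.succ_mem_takeZero _).2 (s.emb_mem a)

theorem emb_takeZero_zero (s : OmitIdx m k) : s.takeZero.emb 0 = 0 := by
  rw [emb_takeZero, Fin.cons_zero]

theorem emb_takeZero_succ (s : OmitIdx m k) (a : Fin k) :
    s.takeZero.emb a.succ = (s.emb a).succ := by
  rw [emb_takeZero, Fin.cons_succ, Function.comp_apply]

/-- The `k + 1`-subsets of `Fin (m + 1)`: first those avoiding `0`, then those containing it. -/
noncomputable def splitOrderIso (m k : ℕ) :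
    OmitIdx m (k + 1) ⊕ₗ OmitIdx m k ≃o OmitIdx (m + 1) (k + 1) :=
  MultivariateVandermonde.sumLexOrderIso skipZero takeZero strictMono_skipZero strictMono_takeZero
    skipZero_lt_takeZero <| by
      simp only [card_eq_choose, Nat.choose_succ_succ' m, add_comm]

/-- The bijection underlying `splitOrderIso`, without the order on the sum. -/
noncomputable def splitEquiv (m k : ℕ) :
    OmitIdx m (k + 1) ⊕ OmitIdx m k ≃ OmitIdx (m + 1) (k + 1) :=
  toLex.trans (splitOrderIso m k).toEquiv

@[simp] theorem splitEquiv_inl (s : OmitIdx m (k + 1)) :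
    splitEquiv m k (Sum.inl s) = s.skipZero := rfl

@[simp] theorem splitEquiv_inr (s : OmitIdx m k) : splitEquiv m k (Sum.inr s) = s.takeZero := rfl

instance : Unique (OmitIdx m 0) where
  default := ⟨∅, rfl⟩
  uniq s := Subtype.ext (Finset.card_eq_zero.1 s.2)

instance : IsEmpty (OmitIdx m (m + 1)) :=
  Fintype.card_eq_zero_iff.1 (by rw [card_eq_choose, Nat.choose_succ_self])

end OmitIdx

namespace MonIdx

variable {n d : ℕ}

theorem card_eq_choose (n d : ℕ) : Fintype.card (MonIdx n d) = (n + d).choose n := by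
  let e : Sym (Fin (n + 1)) d ≃ MonIdx n d := Sym.equivNatSumOfFintype (Fin (n + 1)) d
  rw [← Fintype.card_congr e, Sym.card_sym_eq_choose, Fintype.card_fin, add_right_comm,
    Nat.add_sub_cancel, Nat.choose_symm_add]

theorem lt_iff {f g : MonIdx n d} :
    f < g ↔ ∃ i, (∀ j < i, g.1 j = f.1 j) ∧ g.1 i < f.1 i := Iff.rfl

/-- The product of the monomial `f` and the variable `X j`. -/
def mulVar (j : Fin (n + 1)) (f : MonIdx n d) : MonIdx n (d + 1) :=
  ⟨f.1 + Pi.single j 1, by simp [Finset.sum_add_distrib, f.2]⟩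

/-- The monomial `f` in the variables `X 1, …, X (n + 1)`, which `X 0` does not divide. -/
def shiftVars (f : MonIdx n d) : MonIdx (n + 1) d :=
  ⟨Fin.cons 0 f.1, by simp [Fin.sum_univ_succ (n := n + 1), f.2]⟩

theorem strictMono_mulVar (j : Fin (n + 1)) :
    StrictMono (mulVar j : MonIdx n d → MonIdx n (d + 1)) := by
  rintro f g ⟨i, heq, hlt⟩
  exact ⟨i, fun l hl => congrArg (· + _) (heq l hl), Nat.add_lt_add_right hlt _⟩

theorem strictMono_shiftVars : StrictMono (shiftVars : MonIdx n d → MonIdx (n + 1) d) := by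
  rintro f g ⟨i, heq, hlt⟩
  refine ⟨i.succ, fun l hl => ?_, hlt⟩
  cases l using Fin.cases with
  | zero => rfl
  | succ l => exact heq l (Fin.succ_lt_succ_iff.1 hl)

theorem mulVar_zero_lt_shiftVars (f : MonIdx (n + 1) d) (g : MonIdx n (d + 1)) :
    mulVar 0 f < shiftVars g :=
  lt_iff.2 ⟨0, by simp, by simp [mulVar, shiftVars]⟩

theorem lt_of_mulVar_zero_eq {j : Fin (n + 1)} (hj : j ≠ 0) {f g : MonIdx n d}
    (h : mulVar 0 f = mulVar j g) : g < f := by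
  have h₀ : f.1 0 + 1 = g.1 0 := by
    simpa [mulVar, hj.symm] using congrFun (congrArg Subtype.val h) 0
  exact lt_iff.2 ⟨0, by simp, by omega⟩

/-- The monomials of degree `d + 1`: first those divisible by `X 0`, then the others. -/
noncomputable def splitOrderIso (n d : ℕ) :
    MonIdx (n + 1) d ⊕ₗ MonIdx n (d + 1) ≃o MonIdx (n + 1) (d + 1) :=
  MultivariateVandermonde.sumLexOrderIso (mulVar 0) shiftVars (strictMono_mulVar 0)
    strictMono_shiftVars mulVar_zero_lt_shiftVars <| by
      rw [card_eq_choose, card_eq_choose, card_eq_choose, ← add_assoc, ← add_assoc,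
        add_right_comm n 1 d, Nat.choose_succ_succ' (n + d + 1), add_comm]

/-- The bijection underlying `splitOrderIso`, without the order on the sum. -/
noncomputable def splitEquiv (n d : ℕ) :
    MonIdx (n + 1) d ⊕ MonIdx n (d + 1) ≃ MonIdx (n + 1) (d + 1) :=
  toLex.trans (splitOrderIso n d).toEquiv

@[simp] theorem splitEquiv_inl (f : MonIdx (n + 1) d) :
    splitEquiv n d (Sum.inl f) = mulVar 0 f := rfl

@[simp] theorem splitEquiv_inr (f : MonIdx n (d + 1)) :
    splitEquiv n d (Sum.inr f) = f.shiftVars := rfl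

instance : Unique (MonIdx n 0) where
  default := ⟨0, by simp⟩
  uniq f := Subtype.ext (funext fun i => Finset.sum_eq_zero_iff.1 f.2 i (Finset.mem_univ i))

end MonIdx

namespace MultivariateVandermonde

open Matrix
open scoped Polynomial nonZeroDivisors

variable {m n d k : ℕ}

section CommRing

variable {R : Type*} [CommRing R] {ι : Type*}

/-- The rows `1, …, m` of `X`, multiplied by the corner `X 0 0` and cleared in column `0` by
subtracting multiples of row `0`, without that column. -/
def condense (X : Matrix (Fin (m + 1)) (Fin (k + 1)) R) : Matrix (Fin m) (Fin k) R :=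
  of fun i j => X 0 0 * X i.succ j.succ - X i.succ 0 * X 0 j.succ

theorem condense_submatrix {p q : ℕ} (X : Matrix (Fin (m + 1)) (Fin (k + 1)) R)
    {r : Fin (p + 1) → Fin (m + 1)} {c : Fin (q + 1) → Fin (k + 1)} {r' : Fin p → Fin m}
    {c' : Fin q → Fin k} (hr₀ : r 0 = 0) (hr : ∀ i, r i.succ = (r' i).succ) (hc₀ : c 0 = 0)
    (hc : ∀ j, c j.succ = (c' j).succ) :
    condense (X.submatrix r c) = (condense X).submatrix r' c' := by
  ext i j
  simp only [condense, of_apply, submatrix_apply, hr₀, hr, hc₀, hc]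

/-- **Chiò's condensation identity**, with both sides multiplied by the corner entry so that it
also covers matrices of order one. -/
theorem corner_mul_det_condense (N : Matrix (Fin (k + 1)) (Fin (k + 1)) R) :
    N 0 0 * (condense N).det = N 0 0 ^ k * N.det := by
  let scale : Fin (k + 1) → R := Fin.cons 1 fun _ => N 0 0
  let B : Matrix (Fin (k + 1)) (Fin (k + 1)) R :=
    of (Fin.cons (N 0) fun i j => N 0 0 * N i.succ j - N i.succ 0 * N 0 j)
  have hscale : det (of fun i j => scale i * N i j) = N 0 0 ^ k * N.det := by
    rw [det_mul_column, Fin.prod_univ_succ]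
    simp [scale]
  have hclear : det (of fun i j => scale i * N i j) = B.det := by
    refine det_eq_of_forall_row_eq_smul_add_const (Fin.cons 0 fun i => N i.succ 0) 0 rfl
      fun i j => ?_
    cases i using Fin.cases <;> simp [B, scale]
  have hcol (i : Fin k) : B i.succ 0 = 0 := by
    simp [B, mul_comm]
  have hcorner : B 0 0 = N 0 0 := rfl
  have hminor : B.submatrix Fin.succ Fin.succ = condense N := rfl
  rw [← hscale, hclear, det_succ_column_zero, Fin.sum_univ_succ]
  simp [hcol, hcorner, hminor]

/-- The maximal minor of `X` on the rows in `t`. -/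
def maxMinor (X : Matrix (Fin m) (Fin k) R) (t : OmitIdx m k) : R :=
  (X.submatrix t.emb id).det

theorem mu_apply (X : Matrix (Fin m) (Fin (n + 1)) R) (s : OmitIdx m n) (j : Fin (n + 1)) :
    mu X s j = maxMinor (X.submatrix id j.succAbove) s := rfl

theorem mu'_eq_prod_maxMinor (X : Matrix (Fin m) (Fin (n + 1)) R) :
    mu' X = ∏ t, maxMinor X t := rfl

/-- The matrix `X` without its row `0`. -/
def tailRows (X : Matrix (Fin (m + 1)) (Fin k) R) : Matrix (Fin m) (Fin k) R :=
  X.submatrix Fin.succ id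

theorem maxMinor_skipZero (X : Matrix (Fin (m + 1)) (Fin k) R) (s : OmitIdx m k) :
    maxMinor X s.skipZero = maxMinor (tailRows X) s := by
  rw [maxMinor, OmitIdx.emb_skipZero]
  rfl

theorem corner_mul_maxMinor_condense (X : Matrix (Fin (m + 1)) (Fin (k + 1)) R)
    (s : OmitIdx m k) :
    X 0 0 * maxMinor (condense X) s = X 0 0 ^ k * maxMinor X s.takeZero := by
  have h := corner_mul_det_condense (X.submatrix s.takeZero.emb id)
  rwa [condense_submatrix X (r' := s.emb) (c' := id) s.emb_takeZero_zero s.emb_takeZero_succ rfl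
    fun _ => rfl, submatrix_apply, s.emb_takeZero_zero] at h

theorem mu_submatrix_skipZero (X : Matrix (Fin (m + 1)) (Fin (n + 1)) R) :
    (mu X).submatrix OmitIdx.skipZero id = mu (tailRows X) := by
  ext s j
  exact maxMinor_skipZero (X.submatrix id j.succAbove) s

theorem corner_smul_mu_condense (X : Matrix (Fin (m + 1)) (Fin (n + 2)) R) :
    X 0 0 • mu (condense X) = X 0 0 ^ n • (mu X).submatrix OmitIdx.takeZero Fin.succ := by
  ext s j
  have h := corner_mul_maxMinor_condense (X.submatrix id j.succ.succAbove) s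
  rwa [condense_submatrix X (r' := id) (c' := j.succAbove) rfl (fun _ => rfl) (by simp) (by simp),
    submatrix_apply, Fin.succ_succAbove_zero] at h

/-- The coefficients of the linear form which Laplace expansion along a row `r` on top of a matrix
applies to the minors of the rows below. -/
def laplaceForm (r : Fin k → R) : Fin k → R := fun j => (-1) ^ (j : ℕ) * r j

theorem mu_dotProduct_laplaceForm (X : Matrix (Fin m) (Fin (n + 1)) R) (r : Fin (n + 1) → R)
    (s : OmitIdx m n) :
    mu X s ⬝ᵥ laplaceForm r = maxMinor (of (Fin.cons r X)) s.takeZero := by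
  rw [maxMinor, OmitIdx.emb_takeZero, det_succ_row_zero, dotProduct_comm]
  rfl

theorem mu_tailRows_mulVec (X : Matrix (Fin (m + 1)) (Fin (n + 1)) R) :
    mu (tailRows X) *ᵥ laplaceForm (X 0) = fun s => maxMinor X s.takeZero := by
  ext s
  rw [mulVec, mu_dotProduct_laplaceForm]
  congr 1
  exact Fin.cons_self_tail X

theorem mu_takeZero_mulVec (X : Matrix (Fin (m + 1)) (Fin (n + 2)) R) :
    (mu X).submatrix OmitIdx.takeZero id *ᵥ laplaceForm (X 0) = (0 : OmitIdx m n → R) := by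
  ext s
  refine (mu_dotProduct_laplaceForm X (X 0) s.takeZero).trans
    (det_zero_of_row_eq Fin.zero_ne_one ?_)
  ext j
  rw [submatrix_apply, submatrix_apply, OmitIdx.emb_takeZero_zero, ← Fin.succ_zero_eq_one,
    OmitIdx.emb_takeZero_succ, OmitIdx.emb_takeZero_zero]
  rfl

theorem mu'_succ (X : Matrix (Fin (m + 1)) (Fin (n + 1)) R) :
    mu' X = mu' (tailRows X) * ∏ s : OmitIdx m n, maxMinor X s.takeZero := by
  simp only [mu'_eq_prod_maxMinor]
  rw [← Equiv.prod_comp (OmitIdx.splitEquiv m n), Fintype.prod_sum_type]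
  simp only [OmitIdx.splitEquiv_inl, OmitIdx.splitEquiv_inr, maxMinor_skipZero]

/-- The Veronese map `ν^d` applied to each row of a matrix. -/
def veronese (d : ℕ) (Y : Matrix ι (Fin (n + 1)) R) : Matrix ι (MonIdx n d) R :=
  of fun i => nu d (Y i)

theorem nu_mulVar (y : Fin (n + 1) → R) (j : Fin (n + 1)) (f : MonIdx n d) :
    nu (d + 1) y (MonIdx.mulVar j f) = y j * nu d y f := by
  simp only [nu, MonIdx.mulVar, Pi.add_apply, pow_add, Finset.prod_mul_distrib, Pi.single_apply,
    pow_ite, pow_one, pow_zero, Finset.prod_ite_eq', Finset.mem_univ, if_true, mul_comm]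

theorem nu_shiftVars (y : Fin (n + 2) → R) (f : MonIdx n d) :
    nu d y f.shiftVars = nu d (y ∘ Fin.succ) f := by
  simp [nu, MonIdx.shiftVars, Fin.prod_univ_succ (n := n + 1)]

theorem nu_smul (a : R) (y : Fin (n + 1) → R) (f : MonIdx n d) :
    nu d (a • y) f = a ^ d * nu d y f := by
  have hf : ∑ i, f.1 i = d := f.2
  simp only [nu, Pi.smul_apply, smul_eq_mul, mul_pow, Finset.prod_mul_distrib,
    Finset.prod_pow_eq_pow_sum, hf]

theorem veronese_submatrix_shiftVars (Y : Matrix ι (Fin (n + 2)) R) :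
    (veronese d Y).submatrix id MonIdx.shiftVars = veronese d (Y.submatrix id Fin.succ) := by
  ext i f
  exact nu_shiftVars (Y i) f

theorem veronese_smul (a : R) (Y : Matrix ι (Fin (n + 1)) R) :
    veronese d (a • Y) = a ^ d • veronese d Y := by
  ext i f
  exact nu_smul a (Y i) f

theorem veronese_fromRows {κ : Type*} (Y₁ : Matrix ι (Fin (n + 1)) R)
    (Y₂ : Matrix κ (Fin (n + 1)) R) :
    veronese d (fromRows Y₁ Y₂) = fromRows (veronese d Y₁) (veronese d Y₂) := by
  ext (i | i) f <;> rfl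

/-- The matrix of multiplication by the linear form `∑ j, c j * X j`, from polynomials of degree
`d` to polynomials of degree `d + 1`. -/
def mulForm (d : ℕ) (c : Fin (n + 1) → R) : Matrix (MonIdx n (d + 1)) (MonIdx n d) R :=
  of fun f g => ∑ j, if f = MonIdx.mulVar j g then c j else 0

theorem veronese_mul_mulForm [DecidableEq ι] [Fintype ι] (Y : Matrix ι (Fin (n + 1)) R)
    (c : Fin (n + 1) → R) :
    veronese (d + 1) Y * mulForm d c = diagonal (Y *ᵥ c) * veronese d Y := by
  ext i g
  rw [diagonal_mul, mulVec, dotProduct, Finset.sum_mul, Matrix.mul_apply]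
  simp only [mulForm, of_apply, Finset.mul_sum, mul_ite, mul_zero]
  rw [Finset.sum_comm]
  refine Finset.sum_congr rfl fun j _ => ?_
  simp only [Finset.sum_ite_eq', Finset.mem_univ, if_true, veronese, of_apply, nu_mulVar]
  ring

theorem mulForm_mulVar_zero_self (c : Fin (n + 1) → R) (f : MonIdx n d) :
    mulForm d c (MonIdx.mulVar 0 f) f = c 0 := by
  rw [mulForm, of_apply, Finset.sum_eq_single 0, if_pos rfl]
  · exact fun j _ hj => if_neg fun h => (MonIdx.lt_of_mulVar_zero_eq hj h).false
  · simp

theorem isLowerTriangular_mulForm (c : Fin (n + 1) → R) :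
    ((mulForm d c).submatrix (MonIdx.mulVar 0) id : Matrix (MonIdx n d) _ R).IsLowerTriangular := by
  intro f g (hfg : f < g)
  rw [submatrix_apply, mulForm, of_apply]
  refine Finset.sum_eq_zero fun j _ => if_neg fun h => ?_
  obtain rfl | hj := eq_or_ne j 0
  · exact hfg.ne ((MonIdx.strictMono_mulVar 0).injective h)
  · exact hfg.not_gt (MonIdx.lt_of_mulVar_zero_eq hj h)

theorem det_mulForm (c : Fin (n + 1) → R) :
    ((mulForm d c).submatrix (MonIdx.mulVar 0) id : Matrix (MonIdx n d) _ R).det =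
      c 0 ^ (n + d).choose n := by
  rw [det_of_isLowerTriangular _ (isLowerTriangular_mulForm c)]
  simp [mulForm_mulVar_zero_self, MonIdx.card_eq_choose]

/-- If the rows of `Y₂` lie on the hyperplane `c`, replacing each monomial `X 0 * g` by the product
of the linear form `c` and `g` makes the Veronese matrix block triangular. -/
theorem det_veronese_fromRows (Y₁ : Matrix (MonIdx (n + 1) d) (Fin (n + 2)) R)
    (Y₂ : Matrix (MonIdx n (d + 1)) (Fin (n + 2)) R) (c : Fin (n + 2) → R) (hY₂ : Y₂ *ᵥ c = 0) :
    ((veronese (d + 1) (fromRows Y₁ Y₂)).submatrix id (MonIdx.splitEquiv n d)).det *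
        c 0 ^ (n + 1 + d).choose (n + 1) =
      (∏ i, (Y₁ *ᵥ c) i) * (veronese d Y₁).det *
        (veronese (d + 1) (Y₂.submatrix id Fin.succ)).det := by
  let V := (veronese (d + 1) (fromRows Y₁ Y₂)).submatrix id (MonIdx.splitEquiv n d)
  let multiples := (mulForm d c).submatrix (MonIdx.splitEquiv n d) id
  let remaining : Matrix (MonIdx (n + 1) d ⊕ MonIdx n (d + 1)) (MonIdx n (d + 1)) R := fromRows 0 1
  have hdet : (fromCols multiples remaining).det = c 0 ^ (n + 1 + d).choose (n + 1) := by
    have hblocks : multiples = fromRows ((mulForm d c).submatrix (MonIdx.mulVar 0) id)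
        ((mulForm d c).submatrix MonIdx.shiftVars id) := by
      ext (i | i) g <;> rfl
    rw [hblocks, fromCols_fromRows_eq_fromBlocks, det_fromBlocks_zero₁₂, det_one, mul_one,
      det_mulForm]
  have hmultiples : V * multiples = fromRows (diagonal (Y₁ *ᵥ c) * veronese d Y₁) 0 := by
    rw [submatrix_mul_equiv, submatrix_id_id, veronese_mul_mulForm, fromRows_mulVec, hY₂,
      veronese_fromRows]
    ext (i | i) g <;> simp [diagonal_mul]
  have hremaining : V * remaining = fromRows ((veronese (d + 1) Y₁).submatrix id MonIdx.shiftVars)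
      ((veronese (d + 1) Y₂).submatrix id MonIdx.shiftVars) := by
    have hblocks : V = fromCols (V.submatrix id Sum.inl) (V.submatrix id Sum.inr) := by
      ext i (f | f) <;> rfl
    rw [hblocks, fromCols_mul_fromRows, Matrix.mul_zero, Matrix.mul_one, zero_add]
    ext (i | i) f <;> rfl
  rw [← hdet, ← det_mul, mul_fromCols, hmultiples, hremaining, fromCols_fromRows_eq_fromBlocks,
    det_fromBlocks_zero₂₁, det_mul, det_diagonal, veronese_submatrix_shiftVars]

theorem nonempty_omitIdx_orderIso_monIdx (hm : m = n + d) : Nonempty (OmitIdx m n ≃o MonIdx n d) :=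
  ⟨(Fintype.orderIsoFinOfCardEq _ (by rw [OmitIdx.card_eq_choose, hm])).symm.trans
    (Fintype.orderIsoFinOfCardEq _ (MonIdx.card_eq_choose n d))⟩

theorem omitIdx_orderIso_symm_splitEquiv (e : OmitIdx (m + 1) (n + 1) ≃o MonIdx (n + 1) (d + 1))
    (e₁ : OmitIdx m (n + 1) ≃o MonIdx (n + 1) d) (e₂ : OmitIdx m n ≃o MonIdx n (d + 1))
    (x : MonIdx (n + 1) d ⊕ MonIdx n (d + 1)) :
    e.symm (MonIdx.splitEquiv n d x) =
      OmitIdx.splitEquiv m n (Sum.map e₁.symm e₂.symm x) := by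
  let e' := (OmitIdx.splitOrderIso m n).symm.trans
    ((e₁.sumLexCongr e₂).trans (MonIdx.splitOrderIso n d))
  rw [OrderIso.subsingleton_of_wellFoundedLT.elim e e', OrderIso.symm_apply_eq]
  rcases x with f | f <;> simp [e', OmitIdx.splitEquiv, MonIdx.splitEquiv]

theorem det_veronese_mu_mul_corner_pow (X : Matrix (Fin (m + 1)) (Fin (n + 2)) R)
    (e : OmitIdx (m + 1) (n + 1) ≃o MonIdx (n + 1) (d + 1))
    (e₁ : OmitIdx m (n + 1) ≃o MonIdx (n + 1) d) (e₂ : OmitIdx m n ≃o MonIdx n (d + 1)) :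
    ((veronese (d + 1) (mu X)).submatrix e.symm id).det * X 0 0 ^ (n + 1 + d).choose (n + 1) =
      (∏ s : OmitIdx m (n + 1), maxMinor X s.takeZero) *
        ((veronese d (mu (tailRows X))).submatrix e₁.symm id).det *
        ((veronese (d + 1) ((mu X).submatrix OmitIdx.takeZero Fin.succ)).submatrix
          e₂.symm id).det := by
  have hrows : ((veronese (d + 1) (mu X)).submatrix e.symm id).submatrix
      (MonIdx.splitEquiv n d) (MonIdx.splitEquiv n d) =
      (veronese (d + 1) (fromRows ((mu (tailRows X)).submatrix e₁.symm id)
        ((mu X).submatrix (OmitIdx.takeZero ∘ e₂.symm) id))).submatrix id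
        (MonIdx.splitEquiv n d) := by
    rw [← mu_submatrix_skipZero]
    ext x f
    rw [submatrix_apply, submatrix_apply, omitIdx_orderIso_symm_splitEquiv e e₁ e₂]
    rcases x with g | g <;> rfl
  have hcorner : laplaceForm (X 0) 0 = X 0 0 := by simp [laplaceForm]
  have hvanish : (mu X).submatrix (OmitIdx.takeZero ∘ e₂.symm) id *ᵥ laplaceForm (X 0) = 0 :=
    funext fun f => congrFun (mu_takeZero_mulVec X) (e₂.symm f)
  have htail : ∏ f, ((mu (tailRows X)).submatrix e₁.symm id *ᵥ laplaceForm (X 0)) f =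
      ∏ s : OmitIdx m (n + 1), maxMinor X s.takeZero := by
    rw [← Equiv.prod_comp e₁.symm.toEquiv]
    exact Finset.prod_congr rfl fun f _ => congrFun (mu_tailRows_mulVec X) (e₁.symm f)
  rw [← det_submatrix_equiv_self (MonIdx.splitEquiv n d), hrows, ← hcorner,
    det_veronese_fromRows _ _ _ hvanish, htail]
  rfl

theorem corner_pow_mul_mu'_condense (X : Matrix (Fin (m + 1)) (Fin (n + 2)) R) :
    X 0 0 ^ m.choose (n + 1) * mu' (condense X) =
      X 0 0 ^ ((n + 1) * m.choose (n + 1)) * ∏ s : OmitIdx m (n + 1), maxMinor X s.takeZero := by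
  have h := Fintype.prod_congr _ _ (corner_mul_maxMinor_condense X)
  simpa only [Finset.prod_mul_distrib, Finset.prod_const, Finset.card_univ,
    OmitIdx.card_eq_choose, ← pow_mul, ← mu'_eq_prod_maxMinor] using h

theorem corner_pow_mul_det_veronese_mu_condense (X : Matrix (Fin (m + 1)) (Fin (n + 2)) R)
    (e : OmitIdx m n ≃o MonIdx n d) :
    X 0 0 ^ (d * m.choose n) * ((veronese d (mu (condense X))).submatrix e.symm id).det =
      X 0 0 ^ (n * (d * m.choose n)) *
        ((veronese d ((mu X).submatrix OmitIdx.takeZero Fin.succ)).submatrix e.symm id).det := by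
  have hcard : Fintype.card (MonIdx n d) = m.choose n := by
    rw [← Fintype.card_congr e.toEquiv, OmitIdx.card_eq_choose]
  have h := congrArg (fun Y => ((veronese d Y).submatrix e.symm id).det) (corner_smul_mu_condense X)
  simpa only [veronese_smul, submatrix_smul, Pi.smul_apply, det_smul, hcard, ← pow_mul, mul_assoc]
    using h

theorem det_veronese_mu_takeZero (hm : m = n + (d + 1)) (X : Matrix (Fin (m + 1)) (Fin (n + 2)) R)
    (hX : X 0 0 ∈ R⁰) (e : OmitIdx m n ≃o MonIdx n (d + 1))
    (hcond : ((veronese (d + 1) (mu (condense X))).submatrix e.symm id).det =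
      mu' (condense X) ^ n) :
    ((veronese (d + 1) ((mu X).submatrix OmitIdx.takeZero Fin.succ)).submatrix e.symm id).det =
      X 0 0 ^ m.choose (n + 1) * (∏ s : OmitIdx m (n + 1), maxMinor X s.takeZero) ^ n := by
  have hchoose : (d + 1) * m.choose n = (n + 1) * m.choose (n + 1) := by
    rw [mul_comm (n + 1), Nat.choose_succ_right_eq, mul_comm, hm, Nat.add_sub_cancel_left]
  have hdet := corner_pow_mul_det_veronese_mu_condense X e
  rw [hcond, hchoose] at hdet
  refine (mul_cancel_left_mem_nonZeroDivisors (pow_mem hX (n * ((n + 1) * m.choose (n + 1))))).1 ?_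
  calc X 0 0 ^ (n * ((n + 1) * m.choose (n + 1))) * _
      = X 0 0 ^ ((n + 1) * m.choose (n + 1)) * mu' (condense X) ^ n := hdet.symm
    _ = X 0 0 ^ m.choose (n + 1) * (X 0 0 ^ m.choose (n + 1) * mu' (condense X)) ^ n := by ring
    _ = _ := by rw [corner_pow_mul_mu'_condense]; ring

theorem det_veronese_mu_of_corner_mem_nonZeroDivisors (hm : m = n + (d + 1))
    (X : Matrix (Fin (m + 1)) (Fin (n + 2)) R) (hX : X 0 0 ∈ R⁰)
    (e : OmitIdx (m + 1) (n + 1) ≃o MonIdx (n + 1) (d + 1))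
    (htail : ∀ e₁ : OmitIdx m (n + 1) ≃o MonIdx (n + 1) d,
      ((veronese d (mu (tailRows X))).submatrix e₁.symm id).det = mu' (tailRows X) ^ (n + 1))
    (hcond : ∀ e₂ : OmitIdx m n ≃o MonIdx n (d + 1),
      ((veronese (d + 1) (mu (condense X))).submatrix e₂.symm id).det = mu' (condense X) ^ n) :
    ((veronese (d + 1) (mu X)).submatrix e.symm id).det = mu' X ^ (n + 1) := by
  have hm' : m = n + 1 + d := by omega
  obtain ⟨e₁⟩ := nonempty_omitIdx_orderIso_monIdx hm'
  obtain ⟨e₂⟩ := nonempty_omitIdx_orderIso_monIdx hm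
  have h := det_veronese_mu_mul_corner_pow X e e₁ e₂
  rw [htail, det_veronese_mu_takeZero hm X hX e₂ (hcond e₂), ← hm'] at h
  refine (mul_cancel_right_mem_nonZeroDivisors (pow_mem hX (m.choose (n + 1)))).1 (h.trans ?_)
  rw [mu'_succ]
  ring

section Map

variable {S : Type*} [CommRing S] (f : R →+* S)

theorem maxMinor_map (X : Matrix (Fin m) (Fin k) R) (t : OmitIdx m k) :
    maxMinor (X.map f) t = f (maxMinor X t) :=
  (f.map_det _).symm

theorem mu_map (X : Matrix (Fin m) (Fin (n + 1)) R) : mu (X.map f) = (mu X).map f := by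
  ext s j
  exact maxMinor_map f (X.submatrix id j.succAbove) s

theorem mu'_map (X : Matrix (Fin m) (Fin (n + 1)) R) : mu' (X.map f) = f (mu' X) := by
  simp only [mu'_eq_prod_maxMinor, maxMinor_map, map_prod]

theorem veronese_map (Y : Matrix ι (Fin (n + 1)) R) :
    veronese d (Y.map f) = (veronese d Y).map f := by
  ext i g
  simp [veronese, nu]

theorem det_veronese_mu_map (X : Matrix (Fin m) (Fin (n + 1)) R) (e : MonIdx n d → OmitIdx m n) :
    ((veronese d (mu (X.map f))).submatrix e id).det =
      f ((veronese d (mu X)).submatrix e id).det := by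
  rw [mu_map, veronese_map, f.map_det]
  rfl

end Map

/-- The matrix `X` with the polynomial variable added to its corner, which makes the corner a
non-zero-divisor over any ring. -/
noncomputable def addVarCorner (X : Matrix (Fin (m + 1)) (Fin (n + 1)) R) :
    Matrix (Fin (m + 1)) (Fin (n + 1)) R[X] :=
  X.map Polynomial.C + single 0 0 Polynomial.X

theorem addVarCorner_corner_mem_nonZeroDivisors (X : Matrix (Fin (m + 1)) (Fin (n + 1)) R) :
    addVarCorner X 0 0 ∈ R[X]⁰ := by
  simpa [addVarCorner, add_comm] using (Polynomial.monic_X_add_C (X 0 0)).mem_nonZeroDivisors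

theorem addVarCorner_map_eval_zero (X : Matrix (Fin (m + 1)) (Fin (n + 1)) R) :
    (addVarCorner X).map (Polynomial.evalRingHom 0) = X := by
  rw [addVarCorner, Matrix.map_add _ (map_add _), map_single, Polynomial.coe_evalRingHom,
    Polynomial.eval_X, single_zero, add_zero]
  ext i j
  simp

theorem det_veronese_mu_zero_left (X : Matrix (Fin m) (Fin 1) R) (e : OmitIdx m 0 ≃o MonIdx 0 d) :
    ((veronese d (mu X)).submatrix e.symm id).det = 1 := by
  have := e.symm.toEquiv.unique
  rw [det_unique, submatrix_apply, veronese, of_apply]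
  simp [nu, mu_apply, maxMinor]

theorem det_veronese_mu_zero_right (X : Matrix (Fin n) (Fin (n + 1)) R)
    (e : OmitIdx n n ≃o MonIdx n 0) :
    ((veronese 0 (mu X)).submatrix e.symm id).det = mu' X ^ n := by
  have hf (f : MonIdx n 0) (i : Fin (n + 1)) : f.1 i = 0 := by rw [Unique.eq_default f]; rfl
  rw [mu'_eq_prod_maxMinor, Fintype.prod_empty, one_pow, det_unique, submatrix_apply, veronese,
    of_apply]
  simp [nu, hf]

end CommRing

theorem det_veronese_mu {R : Type*} [CommRing R] (hm : m = n + d)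
    (X : Matrix (Fin m) (Fin (n + 1)) R) (e : OmitIdx m n ≃o MonIdx n d) :
    ((veronese d (mu X)).submatrix e.symm id).det = mu' X ^ n := by
  induction n generalizing m d R with
  | zero => rw [det_veronese_mu_zero_left, pow_zero]
  | succ n ihn =>
    induction d generalizing m R with
    | zero =>
      subst hm
      exact det_veronese_mu_zero_right X e
    | succ d ihd =>
      obtain ⟨m, rfl⟩ : ∃ l, m = l + 1 := ⟨n + 1 + d, hm⟩
      rw [← addVarCorner_map_eval_zero X, det_veronese_mu_map, mu'_map, ← map_pow]
      congr 1
      exact det_veronese_mu_of_corner_mem_nonZeroDivisors (by omega) (addVarCorner X)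
        (addVarCorner_corner_mem_nonZeroDivisors X) e (ihd (by omega) _) (ihn (by omega) _)

end MultivariateVandermonde

/-- **The multivariate Vandermonde identity** (Theorem 1 of the paper).
For a commutative ring `R`, `n, d ≥ 1` and an `(n+d) × (n+1)` matrix `X` over `R`,
the matrix `ν^d (μ X)` — whose rows are indexed by the `n`-element subsets of rows of `X`
(ordered lexicographically by the omitted rows) and whose columns are indexed by the
monomials of total degree `d` in `n + 1` variables (in inverse lexicographic order) —
is a square matrix of order `C(n+d, n)`, and its determinant (computed via the unique
order isomorphism `e` matching the two index orders) equals `(μ' X) ^ n`. -/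
theorem multivariate_vandermonde {R : Type*} [CommRing R] (n d : ℕ) (hn : 1 ≤ n) (hd : 1 ≤ d)
    (X : Matrix (Fin (n + d)) (Fin (n + 1)) R) :
    Fintype.card (OmitIdx (n + d) n) = (n + d).choose n ∧
    Fintype.card (MonIdx n d) = (n + d).choose n ∧
    ∀ e : OmitIdx (n + d) n ≃o MonIdx n d,
      Matrix.det (Matrix.of fun p q : MonIdx n d => nu d (mu X (e.symm p)) q) =
        mu' X ^ n :=
  ⟨OmitIdx.card_eq_choose _ _, MonIdx.card_eq_choose _ _, fun e =>
    MultivariateVandermonde.det_veronese_mu rfl X e⟩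
end

section
/- Let n, d ∈ ℕ with n, d ≥ 1. There exists a sign ε ∈ {1, −1}, depending only on n and d, such that for every commutative ring R and every (n+d)×(n+1) matrix X over R, the matrix η^d(X) is a square matrix of order C(n+d, n) and det(η^d(X)) = ε · μ'(X). -/
/-- The index type for the rows of `η^d X`: subsets of `Fin m` of cardinality `k`,
ordered lexicographically by the increasing sequences of rows *taken* (equivalently, by
the dual of the lexicographic order on indicator functions). -/
def TakeIdx (m k : ℕ) : Type := {s : Finset (Fin m) // s.card = k}

instance (m k : ℕ) : DecidableEq (TakeIdx m k) :=
  inferInstanceAs (DecidableEq {s : Finset (Fin m) // s.card = k})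

instance (m k : ℕ) : Fintype (TakeIdx m k) :=
  inferInstanceAs (Fintype {s : Finset (Fin m) // s.card = k})

noncomputable instance (m k : ℕ) : LinearOrder (TakeIdx m k) :=
  LinearOrder.lift'
    (fun s : {s : Finset (Fin m) // s.card = k} =>
      OrderDual.toDual (toLex fun i : Fin m => decide (i ∈ s.1)))
    (fun s t h => Subtype.ext (Finset.ext fun i => by
      have h' := congrFun ((toLex (α := Fin m → Bool)).injective
        (OrderDual.toDual.injective h)) i
      simpa [decide_eq_decide] using h'))

/-- `η^d X` : each row `x` of `X` is identified with the linear polynomial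
`x 0 • Y 0 + … + x n • Y n`; for a `d`-element set `s` of rows of `X`, the row of `η^d X`
indexed by `s` consists of the coefficients of the product of the corresponding linear
polynomials, a homogeneous polynomial of degree `d` in the `n + 1` variables `Y j`. -/
noncomputable def eta {R : Type*} [CommRing R] {m n d : ℕ}
    (X : Matrix (Fin m) (Fin (n + 1)) R) (s : TakeIdx m d) (f : MonIdx n d) : R :=
  MvPolynomial.coeff (Finsupp.equivFunOnFinite.symm f.1)
    (∏ i ∈ s.1, ∑ j, MvPolynomial.C (X i j) * MvPolynomial.X j)

universe u

/-!
Choose a matching of the `d`-element row sets with the monomials of degree `d` in the `k` variables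
by Pascal's rule, where `m + 1 = k + d` for `m` rows: sets containing the first row go to multiples
of the first variable `Y₀`, the other sets to monomials free of `Y₀`. With this matching the
identity holds without a sign, by induction on `k` and `d`; the sign of the theorem is that of the
permutation comparing the matching with the order isomorphism.

If the first row is `(a, 0, …, 0)`, then `η^d X` is block triangular: the products containing
`a Y₀` have no coefficient at monomials free of `Y₀`, and dividing by `a Y₀` leaves `η^(d-1)` of the
remaining rows, while setting `Y₀ = 0` leaves `η^d` of the remaining rows in one variable less. The
maximal minors split in the same way, by expansion along the first row, and both sides acquire the
same power of `a`.

A first row whose entry `a` at `Y₀` is a unit is brought to this form by a substitution `1 + N` of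
the variables with `N² = 0`, and such a substitution changes neither side. The general case follows
from the matrix of indeterminates over `ℤ`, for which `a` is a unit in the field of fractions.
-/

namespace TakeIdx

variable {m d : ℕ}

theorem card (m d : ℕ) : Fintype.card (TakeIdx m d) = m.choose d :=
  (Fintype.card_finset_len (α := Fin m) d).trans (by rw [Fintype.card_fin])

instance (m : ℕ) : IsEmpty (TakeIdx m (m + 1)) :=
  Fintype.card_eq_zero_iff.1 (by rw [card, Nat.choose_succ_self])

instance (m : ℕ) : Unique (TakeIdx m 0) :=
  ⟨⟨⟨∅, Finset.card_empty⟩⟩, fun s => Subtype.ext (Finset.card_eq_zero.1 s.2)⟩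

/-- The rows in `s`, moved up by one so as to avoid row `0`. -/
def shift (s : TakeIdx m d) : TakeIdx (m + 1) d :=
  ⟨s.1.map (Fin.succEmb m), by rw [Finset.card_map, s.2]⟩

theorem zero_notMem_shift (s : TakeIdx m d) : (0 : Fin (m + 1)) ∉ s.shift.1 := by
  simp [shift, Fin.succ_ne_zero]

/-- Row `0` together with the rows in `s`, moved up by one. -/
def consZero (s : TakeIdx m d) : TakeIdx (m + 1) (d + 1) :=
  ⟨Finset.cons 0 s.shift.1 s.zero_notMem_shift, by rw [Finset.card_cons, s.shift.2]⟩

theorem zero_mem_consZero (s : TakeIdx m d) : (0 : Fin (m + 1)) ∈ s.consZero.1 :=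
  Finset.mem_cons_self 0 _ (h := s.zero_notMem_shift)

theorem shift_injective : Function.Injective (shift : TakeIdx m d → TakeIdx (m + 1) d) :=
  fun _ _ h => Subtype.ext (Finset.map_injective _ (congrArg Subtype.val h))

theorem consZero_injective :
    Function.Injective (consZero : TakeIdx m d → TakeIdx (m + 1) (d + 1)) := fun s t h => by
  have herase : s.shift.1 = t.shift.1 := by
    simpa only [consZero, Finset.cons_eq_insert, Finset.erase_insert (zero_notMem_shift _)]
      using congrArg (fun u : TakeIdx (m + 1) (d + 1) => u.1.erase 0) h
  exact shift_injective (Subtype.ext herase)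

/-- Pascal's rule for sets of rows: each contains row `0` or avoids it. -/
noncomputable def pascalEquiv (m d : ℕ) :
    TakeIdx m d ⊕ TakeIdx m (d + 1) ≃ TakeIdx (m + 1) (d + 1) :=
  Equiv.ofBijective (Sum.elim consZero shift) <| by
    rw [Fintype.bijective_iff_injective_and_card]
    refine ⟨consZero_injective.sumElim shift_injective fun s t h => ?_, ?_⟩
    · exact t.zero_notMem_shift (h ▸ s.zero_mem_consZero)
    · rw [Fintype.card_sum, card, card, card, Nat.choose_succ_succ]

theorem pascalEquiv_inl (s : TakeIdx m d) : pascalEquiv m d (.inl s) = s.consZero := rfl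

theorem pascalEquiv_inr (s : TakeIdx m (d + 1)) : pascalEquiv m d (.inr s) = s.shift := rfl

end TakeIdx

namespace EtaDet

/-- Exponent vectors of the monomials of degree `d` in the variables `σ`. In contrast to `MonIdx`,
`σ` may be empty, so that the induction can start at zero variables. -/
abbrev Monom (σ : Type*) (d : ℕ) : Type _ := {v : σ →₀ ℕ // v.degree = d}

namespace Monom

instance {σ : Type*} [Fintype σ] [DecidableEq σ] (d : ℕ) : Fintype (Monom σ d) :=
  Fintype.subtype (Finset.univ.finsuppAntidiag d) fun v => by simp [Finsupp.degree_eq_sum]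

instance {σ : Type*} : Unique (Monom σ 0) :=
  ⟨⟨⟨0, map_zero _⟩⟩, fun b => Subtype.ext ((Finsupp.degree_eq_zero_iff _).1 b.2)⟩

instance {σ : Type*} [IsEmpty σ] (d : ℕ) : IsEmpty (Monom σ (d + 1)) :=
  ⟨fun b => by simpa [Subsingleton.elim b.1 0] using b.2⟩

variable {k d : ℕ}

/-- The product of a monomial with the first variable. -/
noncomputable def mulX (b : Monom (Fin (k + 1)) d) : Monom (Fin (k + 1)) (d + 1) :=
  ⟨Finsupp.single 0 1 + b.1, by rw [map_add, Finsupp.degree_single, b.2, add_comm]⟩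

/-- A monomial in the variables `1, …, k`, numbered from `0` in the argument. -/
noncomputable def shift (b : Monom (Fin k) d) : Monom (Fin (k + 1)) d :=
  ⟨b.1.cons 0, by
    rw [Finsupp.degree_eq_sum, Fin.sum_univ_succ, Finsupp.cons_zero, zero_add]
    simpa only [Finsupp.cons_succ, Finsupp.degree_eq_sum] using b.2⟩

theorem mulX_injective :
    Function.Injective (mulX : Monom (Fin (k + 1)) d → Monom (Fin (k + 1)) (d + 1)) :=
  fun _ _ h => Subtype.ext (add_left_cancel (congrArg Subtype.val h))

theorem shift_injective : Function.Injective (shift : Monom (Fin k) d → Monom (Fin (k + 1)) d) :=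
  fun _ _ h => Subtype.ext (Finsupp.cons_right_injective 0 (congrArg Subtype.val h))

theorem mulX_ne_shift (b : Monom (Fin (k + 1)) d) (c : Monom (Fin k) (d + 1)) :
    b.mulX ≠ c.shift := fun h => by
  simpa [mulX, shift] using DFunLike.congr_fun (congrArg Subtype.val h) 0

theorem exists_mulX_or_shift (b : Monom (Fin (k + 1)) (d + 1)) :
    (∃ c : Monom (Fin (k + 1)) d, c.mulX = b) ∨ ∃ c : Monom (Fin k) (d + 1), c.shift = b := by
  obtain ⟨v, hv⟩ := b
  by_cases h0 : v 0 = 0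
  · have hcons : v.tail.cons 0 = v := by rw [← h0, Finsupp.cons_tail]
    refine .inr ⟨⟨v.tail, ?_⟩, Subtype.ext hcons⟩
    rw [← hcons, Finsupp.degree_eq_sum, Fin.sum_univ_succ] at hv
    simpa [Finsupp.degree_eq_sum] using hv
  · have hsplit : Finsupp.single 0 1 + (v - Finsupp.single 0 1) = v :=
      add_tsub_cancel_of_le (by simpa using Nat.one_le_iff_ne_zero.2 h0)
    refine .inl ⟨⟨v - Finsupp.single 0 1, ?_⟩, Subtype.ext hsplit⟩
    rw [← hsplit, map_add, Finsupp.degree_single, add_comm] at hv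
    exact Nat.succ_injective hv

/-- Pascal's rule for monomials: each is divisible by the first variable or free of it. -/
noncomputable def pascalEquiv (k d : ℕ) :
    Monom (Fin (k + 1)) d ⊕ Monom (Fin k) (d + 1) ≃ Monom (Fin (k + 1)) (d + 1) :=
  Equiv.ofBijective (Sum.elim mulX shift)
    ⟨mulX_injective.sumElim shift_injective mulX_ne_shift, fun b => by
      simpa [Sum.exists] using b.exists_mulX_or_shift⟩

end Monom

section Substitution

open MvPolynomial

variable {R : Type*} [CommRing R] {σ : Type*} [Fintype σ] {m d : ℕ}

/-- The matrix `η^d X`, for any number of rows and any finite set `σ` of variables. -/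
noncomputable def etaMatrix (d : ℕ) (X : Matrix (Fin m) σ R) : Matrix (TakeIdx m d) (Monom σ d) R :=
  .of fun s b => (∏ i ∈ s.1, X.toMvPolynomial i).coeff b.1

/-- The matrix of the linear substitution of variables `Y i ↦ ∑ j, g i j * Y j` on the monomials of
degree `d`. -/
noncomputable def substMatrix (d : ℕ) (g : Matrix σ σ R) : Matrix (Monom σ d) (Monom σ d) R :=
  .of fun b c => (bind₁ g.toMvPolynomial (monomial b.1 1)).coeff c.1

theorem isHomogeneous_prod_toMvPolynomial (X : Matrix (Fin m) σ R) (s : TakeIdx m d) :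
    (∏ i ∈ s.1, X.toMvPolynomial i).IsHomogeneous d := by
  simpa [s.2] using IsHomogeneous.prod s.1 _ _ fun i _ => X.toMvPolynomial_isHomogeneous i

theorem etaMatrix_map {S : Type*} [CommRing S] (f : R →+* S) (X : Matrix (Fin m) σ R) :
    etaMatrix d (X.map f) = (etaMatrix d X).map f := by
  ext s b
  simp only [etaMatrix, Matrix.of_apply, Matrix.map_apply, Matrix.toMvPolynomial_map, ← map_prod,
    coeff_map]

theorem substMatrix_map {S : Type*} [CommRing S] (f : R →+* S) (g : Matrix σ σ R) :
    substMatrix d (g.map f) = (substMatrix d g).map f := by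
  ext b c
  have hmap : (g.map f).toMvPolynomial = fun i => map f (g.toMvPolynomial i) :=
    funext (Matrix.toMvPolynomial_map f g)
  rw [substMatrix, Matrix.of_apply, hmap, substMatrix, Matrix.map_apply, Matrix.of_apply,
    ← coeff_map, map_bind₁, map_monomial, f.map_one]

variable [DecidableEq σ]

theorem sum_monomial_coeff_of_isHomogeneous {p : MvPolynomial σ R} (hp : p.IsHomogeneous d) :
    ∑ b : Monom σ d, monomial b.1 (p.coeff b.1) = p := by
  ext v
  simp only [coeff_sum, coeff_monomial]
  by_cases hv : v.degree = d
  · rw [Finset.sum_eq_single_of_mem (⟨v, hv⟩ : Monom σ d) (Finset.mem_univ _), if_pos rfl]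
    exact fun b _ hb => if_neg fun h => hb (Subtype.ext h)
  · rw [hp.coeff_eq_zero hv]
    exact Finset.sum_eq_zero fun b _ => if_neg fun h => hv (by rw [← h, b.2])

theorem coeff_bind₁_toMvPolynomial (g : Matrix σ σ R) {p : MvPolynomial σ R}
    (hp : p.IsHomogeneous d) (c : Monom σ d) :
    (bind₁ g.toMvPolynomial p).coeff c.1 =
      ∑ b : Monom σ d, p.coeff b.1 * substMatrix d g b c := by
  conv_lhs => rw [← sum_monomial_coeff_of_isHomogeneous hp, map_sum, coeff_sum]
  refine Finset.sum_congr rfl fun b _ => ?_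
  rw [substMatrix, Matrix.of_apply, ← coeff_C_mul, ← smul_eq_C_mul, ← map_smul, smul_monomial,
    smul_eq_mul, mul_one]

theorem etaMatrix_mul (X : Matrix (Fin m) σ R) (g : Matrix σ σ R) :
    etaMatrix d (X * g) = etaMatrix d X * substMatrix d g := by
  ext s c
  rw [Matrix.mul_apply, etaMatrix, Matrix.of_apply]
  simp only [Matrix.toMvPolynomial_mul, ← map_prod]
  exact coeff_bind₁_toMvPolynomial g (isHomogeneous_prod_toMvPolynomial X s) c

theorem substMatrix_one : substMatrix d (1 : Matrix σ σ R) = 1 := by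
  ext b c
  rw [substMatrix, Matrix.toMvPolynomial_one, bind₁_X_left]
  simp [coeff_monomial, Matrix.one_apply, Subtype.ext_iff]

theorem substMatrix_mul (g h : Matrix σ σ R) :
    substMatrix d (g * h) = substMatrix d g * substMatrix d h := by
  ext b c
  have hbind : (g * h).toMvPolynomial = fun i => bind₁ h.toMvPolynomial (g.toMvPolynomial i) :=
    funext (Matrix.toMvPolynomial_mul g h)
  have hhom : (bind₁ g.toMvPolynomial (monomial b.1 (1 : R))).IsHomogeneous d := by
    simpa using (isHomogeneous_monomial (1 : R) b.2).aeval _ g.toMvPolynomial_isHomogeneous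
  rw [Matrix.mul_apply, substMatrix, Matrix.of_apply, hbind, ← bind₁_bind₁]
  exact coeff_bind₁_toMvPolynomial h hhom c

/-- The substitutions `1 + T N` and `1 - T N` are inverse to each other, so the determinant of
`1 + T N` is a unit of `R[T]`, hence constant in `T`. -/
theorem det_substMatrix_one_add [IsDomain R] {N : Matrix σ σ R} (hN : N * N = 0) :
    (substMatrix d (1 + N)).det = 1 := by
  let g (c : Polynomial R) : Matrix σ σ (Polynomial R) := 1 + c • N.map Polynomial.C
  have hNC : N.map Polynomial.C * N.map Polynomial.C = 0 := by
    rw [← Matrix.map_mul, hN, Matrix.map_zero _ (map_zero _)]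
  have hinv : g Polynomial.X * g (-Polynomial.X) = 1 := by
    simp only [g, add_mul, mul_add, one_mul, mul_one, neg_smul, mul_neg,
      smul_mul_smul_comm, hNC, smul_zero]
    abel
  have hunit : IsUnit (substMatrix d (g Polynomial.X)).det := by
    refine IsUnit.of_mul_eq_one (substMatrix d (g (-Polynomial.X))).det ?_
    rw [← Matrix.det_mul, ← substMatrix_mul, hinv, substMatrix_one, Matrix.det_one]
  obtain ⟨r, -, hr⟩ := Polynomial.isUnit_iff.1 hunit
  have heval (t : R) : (substMatrix d (1 + t • N)).det = r := by
    have hg : (g Polynomial.X).map (Polynomial.evalRingHom t) = 1 + t • N := by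
      ext i j
      simp [g, Matrix.one_apply, apply_ite (Polynomial.eval t), mul_comm t]
    rw [← hg, substMatrix_map, ← RingHom.mapMatrix_apply, ← RingHom.map_det, ← hr,
      Polynomial.coe_evalRingHom, Polynomial.eval_C]
  rw [← one_smul R N, heval 1, ← heval 0, zero_smul, add_zero, substMatrix_one, Matrix.det_one]

end Substitution

section Minors

variable {R : Type*} [CommRing R] {m k : ℕ}

/-- The maximal minor of `X` on the rows in `t`. -/
def minor (X : Matrix (Fin m) (Fin k) R) (t : TakeIdx m k) : R :=
  (X.submatrix (t.1.orderEmbOfFin t.2) id).det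

/-- The product `μ' X` of all maximal minors of `X`, for any number of columns. -/
def minorProd (X : Matrix (Fin m) (Fin k) R) : R :=
  ∏ t, minor X t

theorem minorProd_mul (X : Matrix (Fin m) (Fin k) R) (g : Matrix (Fin k) (Fin k) R) :
    minorProd (X * g) = minorProd X * g.det ^ m.choose k := by
  have hminor (t : TakeIdx m k) : minor (X * g) t = minor X t * g.det := by
    rw [minor, minor, ← Matrix.det_mul, Matrix.submatrix_mul _ _ _ id _ Function.bijective_id,
      Matrix.submatrix_id_id]
  simp only [minorProd, hminor, Finset.prod_mul_distrib, Finset.prod_const, Finset.card_univ,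
    TakeIdx.card]

theorem minorProd_map {S : Type*} [CommRing S] (f : R →+* S) (X : Matrix (Fin m) (Fin k) R) :
    minorProd (X.map f) = f (minorProd X) := by
  simp only [minorProd, map_prod, minor, RingHom.map_det, RingHom.mapMatrix_apply,
    Matrix.submatrix_map]

theorem minor_eq_det_submatrix (X : Matrix (Fin m) (Fin k) R) (t : TakeIdx m k) {r : Fin k → Fin m}
    (hr : StrictMono r) (hmem : ∀ a, r a ∈ t.1) : minor X t = (X.submatrix r id).det := by
  rw [minor, ← Finset.orderEmbOfFin_unique t.2 hmem hr]

theorem minor_shift (X : Matrix (Fin (m + 1)) (Fin k) R) (t : TakeIdx m k) :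
    minor X t.shift = minor (X.submatrix Fin.succ id) t :=
  minor_eq_det_submatrix X t.shift
    (Fin.strictMono_succ.comp (t.1.orderEmbOfFin t.2).strictMono) fun a => by
      simp [TakeIdx.shift]

theorem minor_consZero {X : Matrix (Fin (m + 1)) (Fin (k + 1)) R} {a : R}
    (hX : X 0 = Pi.single 0 a) (t : TakeIdx m k) :
    minor X t.consZero = a * minor (X.submatrix Fin.succ Fin.succ) t := by
  have hmono : StrictMono (Fin.cons 0 (Fin.succ ∘ t.1.orderEmbOfFin t.2) : Fin (k + 1) → _) := by
    intro i j
    cases i using Fin.cases <;> cases j using Fin.cases <;> simp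
  rw [minor_eq_det_submatrix X t.consZero hmono, Matrix.det_succ_row_zero, Fin.sum_univ_succ]
  · simp [hX, minor, Matrix.submatrix_submatrix]
  · exact Fin.cases (by simp [TakeIdx.consZero]) (by simp [TakeIdx.consZero, TakeIdx.shift])

theorem minorProd_of_row_zero_eq_single {X : Matrix (Fin (m + 1)) (Fin (k + 1)) R} {a : R}
    (hX : X 0 = Pi.single 0 a) :
    minorProd X = a ^ m.choose k *
      (minorProd (X.submatrix Fin.succ id) * minorProd (X.submatrix Fin.succ Fin.succ)) := by
  have hcons : ∏ t, minor X (TakeIdx.consZero t) =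
      a ^ m.choose k * minorProd (X.submatrix Fin.succ Fin.succ) := by
    simp only [minor_consZero hX, Finset.prod_mul_distrib, Finset.prod_const, Finset.card_univ,
      TakeIdx.card, minorProd]
  rw [minorProd, ← (TakeIdx.pascalEquiv m k).prod_comp, Fintype.prod_sum_type]
  simp only [TakeIdx.pascalEquiv_inl, TakeIdx.pascalEquiv_inr, hcons, minor_shift]
  rw [mul_assoc, mul_comm (minorProd _), minorProd, minorProd]

end Minors

section FirstRow

open MvPolynomial

variable {R : Type*} [CommRing R] {m k d : ℕ}

theorem toMvPolynomial_of_row_eq_single {ι σ : Type*} [Fintype σ] [DecidableEq σ] {X : Matrix ι σ R}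
    {i : ι} {j : σ} {a : R} (hX : X i = Pi.single j a) :
    X.toMvPolynomial i = C a * MvPolynomial.X j := by
  rw [Matrix.toMvPolynomial, Finset.sum_eq_single_of_mem j (Finset.mem_univ j), hX,
    Pi.single_eq_same, C_mul_X_eq_monomial]
  intro l _ hl
  rw [hX, Pi.single_eq_of_ne hl, monomial_zero]

theorem etaMatrix_consZero {X : Matrix (Fin (m + 1)) (Fin (k + 1)) R} {a : R}
    (hX : X 0 = Pi.single 0 a) (s : TakeIdx m d) (b : Monom (Fin (k + 1)) (d + 1)) :
    etaMatrix (d + 1) X s.consZero b = a *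
      (MvPolynomial.X 0 * ∏ i ∈ s.1, (X.submatrix Fin.succ id).toMvPolynomial i).coeff b.1 := by
  rw [etaMatrix, Matrix.of_apply, TakeIdx.consZero, Finset.prod_cons,
    toMvPolynomial_of_row_eq_single hX, mul_assoc, coeff_C_mul, TakeIdx.shift, Finset.prod_map]
  rfl

theorem etaMatrix_consZero_mulX {X : Matrix (Fin (m + 1)) (Fin (k + 1)) R} {a : R}
    (hX : X 0 = Pi.single 0 a) (s : TakeIdx m d) (b : Monom (Fin (k + 1)) d) :
    etaMatrix (d + 1) X s.consZero b.mulX = a * etaMatrix d (X.submatrix Fin.succ id) s b := by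
  rw [etaMatrix_consZero hX, Monom.mulX, coeff_X_mul, etaMatrix, Matrix.of_apply]

theorem etaMatrix_consZero_shift {X : Matrix (Fin (m + 1)) (Fin (k + 1)) R} {a : R}
    (hX : X 0 = Pi.single 0 a) (s : TakeIdx m d) (b : Monom (Fin k) (d + 1)) :
    etaMatrix (d + 1) X s.consZero b.shift = 0 := by
  rw [etaMatrix_consZero hX, coeff_X_mul', if_neg (by simp [Monom.shift]), mul_zero]

/-- Reading off the coefficients at monomials free of the first variable amounts to setting that
variable to `0`. -/
theorem etaMatrix_shift_shift (X : Matrix (Fin (m + 1)) (Fin (k + 1)) R) (s : TakeIdx m d)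
    (b : Monom (Fin k) d) :
    etaMatrix d X s.shift b.shift = etaMatrix d (X.submatrix Fin.succ Fin.succ) s b := by
  have hlin (i : Fin m) : Polynomial.constantCoeff (finSuccEquiv R k (X.toMvPolynomial i.succ)) =
      (X.submatrix Fin.succ Fin.succ).toMvPolynomial i := by
    simp [Matrix.toMvPolynomial, Fin.sum_univ_succ, ← C_mul_X_eq_monomial, finSuccEquiv_apply]
  rw [etaMatrix, Matrix.of_apply, Monom.shift, ← finSuccEquiv_coeff_coeff,
    ← Polynomial.constantCoeff_apply, TakeIdx.shift, Finset.prod_map, map_prod, map_prod]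
  simp only [Fin.coe_succEmb, hlin]
  rfl

/-- The determinant of `η^d X`, its rows and columns being matched by `e`. -/
noncomputable def detEta (e : TakeIdx m d ≃ Monom (Fin k) d) (X : Matrix (Fin m) (Fin k) R) : R :=
  ((etaMatrix d X).submatrix id e).det

theorem detEta_mul (e : TakeIdx m d ≃ Monom (Fin k) d) (X : Matrix (Fin m) (Fin k) R)
    (g : Matrix (Fin k) (Fin k) R) :
    detEta e (X * g) = detEta e X * (substMatrix d g).det := by
  rw [detEta, etaMatrix_mul, ← Matrix.submatrix_mul_equiv _ _ id e e, Matrix.det_mul,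
    Matrix.det_submatrix_equiv_self, detEta]

theorem detEta_map {S : Type*} [CommRing S] (f : R →+* S) (e : TakeIdx m d ≃ Monom (Fin k) d)
    (X : Matrix (Fin m) (Fin k) R) : detEta e (X.map f) = f (detEta e X) := by
  rw [detEta, etaMatrix_map, detEta, RingHom.map_det, RingHom.mapMatrix_apply,
    Matrix.submatrix_map]

/-- The matching of row sets with monomials obtained from two smaller ones by Pascal's rule. -/
noncomputable def pascalMatching (e₁ : TakeIdx m d ≃ Monom (Fin (k + 1)) d)
    (e₂ : TakeIdx m (d + 1) ≃ Monom (Fin k) (d + 1)) :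
    TakeIdx (m + 1) (d + 1) ≃ Monom (Fin (k + 1)) (d + 1) :=
  (TakeIdx.pascalEquiv m d).symm.trans ((e₁.sumCongr e₂).trans (Monom.pascalEquiv k d))

theorem pascalMatching_consZero (e₁ : TakeIdx m d ≃ Monom (Fin (k + 1)) d)
    (e₂ : TakeIdx m (d + 1) ≃ Monom (Fin k) (d + 1)) (s : TakeIdx m d) :
    pascalMatching e₁ e₂ s.consZero = (e₁ s).mulX := by
  simp only [pascalMatching, Equiv.trans_apply, ← TakeIdx.pascalEquiv_inl, Equiv.symm_apply_apply]
  rfl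

theorem pascalMatching_shift (e₁ : TakeIdx m d ≃ Monom (Fin (k + 1)) d)
    (e₂ : TakeIdx m (d + 1) ≃ Monom (Fin k) (d + 1)) (s : TakeIdx m (d + 1)) :
    pascalMatching e₁ e₂ s.shift = (e₂ s).shift := by
  simp only [pascalMatching, Equiv.trans_apply, ← TakeIdx.pascalEquiv_inr, Equiv.symm_apply_apply]
  rfl

theorem detEta_pascalMatching_of_row_zero_eq_single (e₁ : TakeIdx m d ≃ Monom (Fin (k + 1)) d)
    (e₂ : TakeIdx m (d + 1) ≃ Monom (Fin k) (d + 1)) {X : Matrix (Fin (m + 1)) (Fin (k + 1)) R}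
    {a : R} (hX : X 0 = Pi.single 0 a) :
    detEta (pascalMatching e₁ e₂) X = a ^ m.choose d *
      (detEta e₁ (X.submatrix Fin.succ id) * detEta e₂ (X.submatrix Fin.succ Fin.succ)) := by
  have hblocks : ((etaMatrix (d + 1) X).submatrix id (pascalMatching e₁ e₂)).submatrix
        (TakeIdx.pascalEquiv m d) (TakeIdx.pascalEquiv m d) =
      Matrix.fromBlocks (a • (etaMatrix d (X.submatrix Fin.succ id)).submatrix id e₁) 0
        ((etaMatrix (d + 1) X).submatrix TakeIdx.shift (Monom.mulX ∘ e₁))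
        ((etaMatrix (d + 1) (X.submatrix Fin.succ Fin.succ)).submatrix id e₂) := by
    ext (s | s) (t | t) <;>
      simp [TakeIdx.pascalEquiv_inl, TakeIdx.pascalEquiv_inr, pascalMatching_consZero,
        pascalMatching_shift, etaMatrix_consZero_mulX hX, etaMatrix_consZero_shift hX,
        etaMatrix_shift_shift]
  rw [detEta, ← Matrix.det_submatrix_equiv_self (TakeIdx.pascalEquiv m d), hblocks,
    Matrix.det_fromBlocks_zero₁₂, Matrix.det_smul, TakeIdx.card, mul_assoc, detEta, detEta]

end FirstRow

section UnitPivot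

variable {R : Type*} [CommRing R] {m k d : ℕ}

theorem exists_mul_self_eq_zero_and_vecMul_eq_single {x : Fin (k + 1) → R} (hx : IsUnit (x 0)) :
    ∃ N : Matrix (Fin (k + 1)) (Fin (k + 1)) R,
      N * N = 0 ∧ (1 + N).det = 1 ∧ Matrix.vecMul x (1 + N) = Pi.single 0 (x 0) := by
  obtain ⟨u, hu⟩ := hx
  let v : Fin (k + 1) → R := Fin.cons 0 fun j => -(↑u⁻¹ * x j.succ)
  refine ⟨Matrix.vecMulVec (Pi.single 0 1) v, ?_, ?_, ?_⟩
  · rw [Matrix.vecMulVec_mul_vecMulVec]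
    simp [v]
  · rw [Matrix.vecMulVec_eq Unit, Matrix.det_one_add_replicateCol_mul_replicateRow]
    simp [v]
  · rw [Matrix.vecMul_add, Matrix.vecMul_one, Matrix.vecMul_vecMulVec]
    ext j
    refine Fin.cases ?_ (fun j => ?_) j <;> simp [v, ← hu]

theorem detEta_pascalMatching_eq_minorProd_of_isUnit [IsDomain R] (hm : m = k + d)
    {e₁ : TakeIdx m d ≃ Monom (Fin (k + 1)) d} {e₂ : TakeIdx m (d + 1) ≃ Monom (Fin k) (d + 1)}
    (h₁ : ∀ X : Matrix (Fin m) (Fin (k + 1)) R, detEta e₁ X = minorProd X)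
    (h₂ : ∀ X : Matrix (Fin m) (Fin k) R, detEta e₂ X = minorProd X)
    {X : Matrix (Fin (m + 1)) (Fin (k + 1)) R} (hX : IsUnit (X 0 0)) :
    detEta (pascalMatching e₁ e₂) X = minorProd X := by
  obtain ⟨N, hN, hdet, hrow⟩ := exists_mul_self_eq_zero_and_vecMul_eq_single hX
  have hrow' : (X * (1 + N) : Matrix _ _ R) 0 = Pi.single 0 (X 0 0) := by
    rw [Matrix.mul_apply_eq_vecMul, hrow]
  calc detEta (pascalMatching e₁ e₂) X
    _ = detEta (pascalMatching e₁ e₂) (X * (1 + N)) := by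
      rw [detEta_mul, det_substMatrix_one_add hN, mul_one]
    _ = minorProd (X * (1 + N)) := by
      rw [detEta_pascalMatching_of_row_zero_eq_single e₁ e₂ hrow',
        minorProd_of_row_zero_eq_single hrow', h₁, h₂,
        Nat.choose_symm_of_eq_add hm]
    _ = minorProd X := by rw [minorProd_mul, hdet, one_pow, mul_one]

end UnitPivot

section Generic

open Matrix (mvPolynomialX)

variable {m k d : ℕ}

theorem detEta_eq_minorProd_of_mvPolynomialX {e : TakeIdx m d ≃ Monom (Fin k) d}
    (h : detEta e (mvPolynomialX (Fin m) (Fin k) ℤ) =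
      minorProd (mvPolynomialX (Fin m) (Fin k) ℤ))
    {R : Type*} [CommRing R] (X : Matrix (Fin m) (Fin k) R) : detEta e X = minorProd X := by
  let φ := MvPolynomial.eval₂Hom (Int.castRingHom R) fun p : Fin m × Fin k => X p.1 p.2
  have hX : (mvPolynomialX (Fin m) (Fin k) ℤ).map φ = X :=
    Matrix.mvPolynomialX_map_eval₂ _ X
  rw [← hX, detEta_map, h, minorProd_map]

theorem detEta_pascalMatching_mvPolynomialX (hm : m = k + d)
    {e₁ : TakeIdx m d ≃ Monom (Fin (k + 1)) d} {e₂ : TakeIdx m (d + 1) ≃ Monom (Fin k) (d + 1)}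
    (h₁ : detEta e₁ (mvPolynomialX _ _ ℤ) = minorProd (mvPolynomialX _ _ ℤ))
    (h₂ : detEta e₂ (mvPolynomialX _ _ ℤ) = minorProd (mvPolynomialX _ _ ℤ)) :
    detEta (pascalMatching e₁ e₂) (mvPolynomialX _ _ ℤ) =
      minorProd (mvPolynomialX _ _ ℤ) := by
  let A := MvPolynomial (Fin (m + 1) × Fin (k + 1)) ℤ
  have hinj := IsFractionRing.injective A (FractionRing A)
  apply hinj
  rw [← detEta_map, ← minorProd_map]
  refine detEta_pascalMatching_eq_minorProd_of_isUnit hm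
    (detEta_eq_minorProd_of_mvPolynomialX h₁) (detEta_eq_minorProd_of_mvPolynomialX h₂) ?_
  exact ((map_ne_zero_iff _ hinj).2 (MvPolynomial.X_ne_zero _)).isUnit

theorem detEta_mvPolynomialX_of_isEmpty (e : TakeIdx m (m + 1) ≃ Monom (Fin 0) (m + 1)) :
    detEta e (mvPolynomialX _ _ ℤ) = minorProd (mvPolynomialX _ _ ℤ) := by
  rw [detEta, Matrix.det_isEmpty, minorProd, Finset.prod_eq_one fun t _ => Matrix.det_isEmpty]

theorem detEta_mvPolynomialX_of_unique (e : TakeIdx m 0 ≃ Monom (Fin (m + 1)) 0) :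
    detEta e (mvPolynomialX _ _ ℤ) = minorProd (mvPolynomialX _ _ ℤ) := by
  rw [detEta, Matrix.det_unique, minorProd, Fintype.prod_empty, Matrix.submatrix_apply,
    Subsingleton.elim (e default) default]
  exact MvPolynomial.coeff_zero_one

theorem exists_detEta_mvPolynomialX_eq_minorProd (h : m + 1 = k + d) :
    ∃ e : TakeIdx m d ≃ Monom (Fin k) d,
      detEta e (mvPolynomialX _ _ ℤ) = minorProd (mvPolynomialX _ _ ℤ) := by
  induction k generalizing m d with
  | zero =>
    obtain rfl : d = m + 1 := by omega
    exact ⟨Equiv.equivOfIsEmpty _ _, detEta_mvPolynomialX_of_isEmpty _⟩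
  | succ k ihk =>
    induction d generalizing m with
    | zero =>
      obtain rfl : m = k := by omega
      exact ⟨Equiv.ofUnique _ _, detEta_mvPolynomialX_of_unique _⟩
    | succ d ihd =>
      obtain ⟨m, rfl⟩ : ∃ m', m = m' + 1 := ⟨m - 1, by omega⟩
      obtain ⟨e₁, h₁⟩ := ihd (m := m) (by omega)
      obtain ⟨e₂, h₂⟩ := ihk (m := m) (d := d + 1) (by omega)
      exact ⟨pascalMatching e₁ e₂, detEta_pascalMatching_mvPolynomialX (by omega) h₁ h₂⟩

theorem exists_sign_detEta_eq_smul_minorProd (h : m + 1 = k + d)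
    (e : TakeIdx m d ≃ Monom (Fin k) d) :
    ∃ ε : ℤˣ, ∀ (R : Type u) [CommRing R] (X : Matrix (Fin m) (Fin k) R),
      detEta e X = (ε : ℤ) • minorProd X := by
  obtain ⟨e₀, he₀⟩ := exists_detEta_mvPolynomialX_eq_minorProd h
  refine ⟨Equiv.Perm.sign (e.trans e₀.symm), fun R _ X => ?_⟩
  have hperm : (etaMatrix d X).submatrix id e =
      ((etaMatrix d X).submatrix id e₀).submatrix id (e.trans e₀.symm) := by
    ext s t
    simp
  rw [detEta, hperm, Matrix.det_permute', ← detEta, detEta_eq_minorProd_of_mvPolynomialX he₀,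
    zsmul_eq_mul]

end Generic

section MonIdx

variable {n d m : ℕ}

theorem card_monIdx (n d : ℕ) : Fintype.card (MonIdx n d) = (n + d).choose n := by
  let e : Sym (Fin (n + 1)) d ≃ MonIdx n d := Sym.equivNatSumOfFintype _ d
  rw [← Fintype.card_congr e, Sym.card_sym_eq_choose, Fintype.card_fin, Nat.add_right_comm,
    Nat.add_sub_cancel, Nat.choose_symm_add]

/-- Exponent sequences as finitely supported functions. -/
noncomputable def monIdxEquivMonom (n d : ℕ) : MonIdx n d ≃ Monom (Fin (n + 1)) d :=
  Finsupp.equivFunOnFinite.symm.subtypeEquiv fun f => by simp [Finsupp.degree_eq_sum]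

theorem det_eta_eq_detEta {R : Type*} [CommRing R] (X : Matrix (Fin m) (Fin (n + 1)) R)
    (e : TakeIdx m d ≃ MonIdx n d) :
    (Matrix.of fun p q : MonIdx n d => eta X (e.symm p) q).det =
      detEta (e.trans (monIdxEquivMonom n d)) X := by
  rw [detEta, ← Matrix.det_submatrix_equiv_self e]
  congr 1
  ext s t
  simp only [Matrix.submatrix_apply, Matrix.of_apply, Equiv.symm_apply_apply, eta, etaMatrix,
    Matrix.toMvPolynomial, MvPolynomial.C_mul_X_eq_monomial]
  rfl

theorem minorProd_eq_mu' {R : Type*} [CommRing R] (X : Matrix (Fin m) (Fin (n + 1)) R) :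
    minorProd X = mu' X := rfl

end MonIdx

end EtaDet

/-- **Corollary (dual form of the multivariate Vandermonde identity).**
For `n, d ≥ 1` there is a sign `ε ∈ {1, -1}`, depending only on `n` and `d`, such that for
every commutative ring `R` and every `(n+d) × (n+1)` matrix `X` over `R`, the matrix
`η^d X` — with rows indexed by `d`-element subsets of rows (ordered lexicographically by
the rows taken) and columns indexed by degree-`d` monomials (in inverse lexicographic
order) — is square of order `C(n+d, n)`, and its determinant (computed via the unique
order isomorphism `e` matching the two index orders) equals `ε • μ' X`. -/
theorem eta_det (n d : ℕ) (hn : 1 ≤ n) (hd : 1 ≤ d) :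
    ∃ ε : ℤ, (ε = 1 ∨ ε = -1) ∧
      Fintype.card (TakeIdx (n + d) d) = (n + d).choose n ∧
      Fintype.card (MonIdx n d) = (n + d).choose n ∧
      ∀ (R : Type u) [CommRing R] (X : Matrix (Fin (n + d)) (Fin (n + 1)) R),
        ∀ e : TakeIdx (n + d) d ≃o MonIdx n d,
          Matrix.det (Matrix.of fun p q : MonIdx n d => eta X (e.symm p) q) = ε • mu' X := by
  have hrows : Fintype.card (TakeIdx (n + d) d) = (n + d).choose n := by
    rw [TakeIdx.card, Nat.choose_symm_add]
  let e₀ : TakeIdx (n + d) d ≃o MonIdx n d :=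
    (monoEquivOfFin _ hrows).symm.trans (monoEquivOfFin _ (EtaDet.card_monIdx n d))
  obtain ⟨ε, hε⟩ := EtaDet.exists_sign_detEta_eq_smul_minorProd.{u} (Nat.add_right_comm n d 1)
    (e₀.toEquiv.trans (EtaDet.monIdxEquivMonom n d))
  refine ⟨ε, ?_, hrows, EtaDet.card_monIdx n d, fun R _ X e => ?_⟩
  · rcases Int.units_eq_one_or ε with rfl | rfl <;> simp
  · rw [Subsingleton.elim e e₀, ← EtaDet.minorProd_eq_mu', ← hε]
    exact EtaDet.det_eta_eq_detEta X e₀.toEquiv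
end

section
/- Let R be a commutative ring, m ≥ 1 and d ≥ 0, and let u be an m×m matrix over R. Consider the R-linear endomorphism S^d(u) of the (free, finite-rank) R-module of homogeneous polynomials of total degree d in m variables Y_0, …, Y_{m−1}, induced by the linear substitution Y_j ↦ u_{0j}·Y_0 + … + u_{(m−1)j}·Y_{m−1} (i.e. the d-th symmetric power of u acting on degree-d forms). Then det(S^d(u)) = (det u)^{C(m+d−1, m)}. -/
/-!
Both sides are multiplicative in `u`. Over a field with a unit `a ≠ 1`, a multiplicative map from
matrices to a commutative monoid is determined by its values on diagonal matrices: it sends every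
transvection `t(c)` to `1`, because `t(b)` is conjugate to `t(ab) = t((a - 1)b) t(b)` by a diagonal
matrix. On a diagonal matrix the monomials are eigenvectors of `S^d`, and each diagonal entry occurs
in the determinant to the power `C(m + d - 1, m)`, the total exponent of one variable in all
monomials of degree `d`. The case of a ring follows from that of the fraction field of `ℤ[x_ij]`,
because the matrix of `S^d(u)` in the basis of monomials commutes with ring homomorphisms.
-/

open MvPolynomial

/-- The `d`-th symmetric power `S^d(u)` of an `m × m` matrix `u` over `R`, realised as the
`R`-linear endomorphism of the module of homogeneous polynomials of total degree `d` in the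
variables `Y 0, …, Y (m-1)` induced by the linear substitution
`Y j ↦ u 0 j • Y 0 + … + u (m-1) j • Y (m-1)`. -/
noncomputable def symPow {R : Type*} [CommRing R] (m d : ℕ) (u : Matrix (Fin m) (Fin m) R) :
    MvPolynomial.homogeneousSubmodule (Fin m) R d →ₗ[R]
      MvPolynomial.homogeneousSubmodule (Fin m) R d :=
  (MvPolynomial.aeval fun j : Fin m =>
      ∑ i, MvPolynomial.C (u i j) * MvPolynomial.X i :
        MvPolynomial (Fin m) R →ₐ[R] MvPolynomial (Fin m) R).toLinearMap.restrict
    (fun x hx => by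
      rw [MvPolynomial.mem_homogeneousSubmodule] at hx ⊢
      have h1 : ∀ j : Fin m,
          (∑ i, MvPolynomial.C (u i j) * MvPolynomial.X i :
            MvPolynomial (Fin m) R).IsHomogeneous 1 :=
        fun j => MvPolynomial.IsHomogeneous.sum _ _ _
          (fun i _ => by simpa using MvPolynomial.isHomogeneous_C_mul_X_pow (u i j) i 1)
      simpa using hx.aeval _ h1)

section MonoidHom

open Matrix

variable {n R K M : Type*} [Fintype n] [DecidableEq n] [CommRing R] [Field K] [CommMonoid M]

theorem diagonal_update_mul_transvection {i j : n} (hij : i ≠ j) (a c : R) :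
    diagonal (Function.update 1 i a) * transvection i j c =
      transvection i j (a * c) * diagonal (Function.update 1 i a) := by
  ext k l
  rw [diagonal_mul, mul_diagonal]
  simp only [transvection, Matrix.add_apply, one_apply, single_apply, Function.update_apply,
    Pi.one_apply]
  grind

theorem isUnit_transvection {i j : n} (hij : i ≠ j) (c : R) : IsUnit (transvection i j c) := by
  simp [isUnit_iff_isUnit_det, det_transvection_of_ne i j hij c]

theorem map_transvection_eq_one (f : Matrix n n R →* M) {a : R} (ha : IsUnit a)
    (ha' : IsUnit (a - 1)) {i j : n} (hij : i ≠ j) (c : R) : f (transvection i j c) = 1 := by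
  obtain ⟨b, rfl⟩ : ∃ b, (a - 1) * b = c := ha'.dvd.imp fun _ => Eq.symm
  have hD : IsUnit (diagonal (Function.update 1 i a) : Matrix n n R) := by
    rw [isUnit_diagonal, Pi.isUnit_iff]
    intro k
    obtain rfl | hk := eq_or_ne k i <;> simp [*]
  have hconj : f (transvection i j (a * b)) = f (transvection i j b) := by
    apply (hD.map f).mul_right_cancel
    rw [← map_mul, ← diagonal_update_mul_transvection hij, map_mul, mul_comm]
  apply ((isUnit_transvection hij b).map f).mul_right_cancel
  rw [← map_mul, transvection_mul_transvection_same i j hij, sub_one_mul, sub_add_cancel, hconj,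
    one_mul]

theorem monoidHom_ext_diagonal [Nontrivial Kˣ] {f g : Matrix n n K →* M}
    (h : ∀ D : n → K, f (diagonal D) = g (diagonal D)) : f = g := by
  obtain ⟨a, ha⟩ := exists_ne (1 : Kˣ)
  have ha' : IsUnit (a - 1 : K) := (sub_ne_zero.2 (Units.val_eq_one.not.2 ha)).isUnit
  ext u
  induction u using diagonal_transvection_induction with
  | hdiag D => exact h D
  | htransvec t =>
    exact (map_transvection_eq_one f a.isUnit ha' t.hij t.c).trans
      (map_transvection_eq_one g a.isUnit ha' t.hij t.c).symm
  | hmul A B hA hB => rw [map_mul, map_mul, hA, hB]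

end MonoidHom

theorem det_eq_prod_of_apply_basis {ι R M : Type*} [Fintype ι] [CommRing R] [AddCommGroup M]
    [Module R M] (b : Module.Basis ι R M) {f : M →ₗ[R] M} {c : ι → R}
    (h : ∀ i, f (b i) = c i • b i) : LinearMap.det f = ∏ i, c i := by
  classical
  have hf : LinearMap.toMatrix b b f = Matrix.diagonal c := by
    ext i j
    rw [LinearMap.toMatrix_apply, h, Matrix.diagonal_apply]
    obtain rfl | hij := eq_or_ne i j <;> simp [*]
  rw [← LinearMap.det_toMatrix b, hf, Matrix.det_diagonal]

section Exponents

open Finset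

variable {ι : Type*} [DecidableEq ι] {s : Finset ι} {i j : ι}

theorem equivMapDomain_swap_mem_finsuppAntidiag (hi : i ∈ s) (hj : j ∈ s) {d : ℕ} {e : ι →₀ ℕ}
    (he : e ∈ s.finsuppAntidiag d) :
    e.equivMapDomain (Equiv.swap i j) ∈ s.finsuppAntidiag d := by
  have hs : ∀ k, Equiv.swap i j k ∈ s ↔ k ∈ s := fun k => by
    rw [Equiv.swap_apply_def]; split_ifs <;> simp_all
  rw [mem_finsuppAntidiag] at he ⊢
  refine ⟨?_, fun k hk => (hs k).1 (he.2 ?_)⟩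
  · rw [← he.1]
    exact sum_equiv (Equiv.swap i j) (fun k => (hs k).symm) fun k _ => by simp
  · simpa using hk

theorem sum_finsuppAntidiag_apply_eq (hi : i ∈ s) (hj : j ∈ s) (d : ℕ) :
    ∑ e ∈ s.finsuppAntidiag d, e i = ∑ e ∈ s.finsuppAntidiag d, e j := by
  have hswap (e : ι →₀ ℕ) (he : e ∈ s.finsuppAntidiag d) :=
    equivMapDomain_swap_mem_finsuppAntidiag hi hj he
  exact sum_nbij' (Finsupp.equivMapDomain (Equiv.swap i j))
    (Finsupp.equivMapDomain (Equiv.swap i j)) hswap hswap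
    (fun e _ => by ext; simp) (fun e _ => by ext; simp) (fun e _ => by simp)

theorem card_mul_sum_finsuppAntidiag_apply (hi : i ∈ s) (d : ℕ) :
    #s * ∑ e ∈ s.finsuppAntidiag d, e i = #(s.finsuppAntidiag d) * d := calc
  #s * ∑ e ∈ s.finsuppAntidiag d, e i = ∑ j ∈ s, ∑ e ∈ s.finsuppAntidiag d, e j := by
    rw [sum_congr rfl fun j hj => sum_finsuppAntidiag_apply_eq hj hi d, sum_const, smul_eq_mul]
  _ = ∑ e ∈ s.finsuppAntidiag d, ∑ j ∈ s, e j := sum_comm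
  _ = #(s.finsuppAntidiag d) * d := by
    rw [sum_congr rfl fun e he => (mem_finsuppAntidiag.1 he).1, sum_const, smul_eq_mul]

theorem sum_finsuppAntidiag_apply (hi : i ∈ s) (d : ℕ) :
    ∑ e ∈ s.finsuppAntidiag d, e i = (#s + d - 1).choose #s := by
  have h := card_mul_sum_finsuppAntidiag_apply hi d
  rw [card_finsuppAntidiag_nat_eq_choose] at h
  obtain ⟨k, hk⟩ : ∃ k, #s = k + 1 := Nat.exists_eq_add_one.2 (card_pos.2 ⟨i, hi⟩)
  rw [hk, Nat.add_right_comm, Nat.add_sub_cancel] at h ⊢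
  apply Nat.eq_of_mul_eq_mul_left k.succ_pos
  rw [h, mul_comm (k + 1), Nat.choose_succ_right_eq, Nat.choose_symm_add, Nat.add_sub_cancel_left]

end Exponents

section MonomialBasis

variable {σ R : Type*} [Fintype σ] [DecidableEq σ] [CommSemiring R] {d : ℕ}

theorem mem_finsuppAntidiag_univ {e : σ →₀ ℕ} :
    e ∈ Finset.univ.finsuppAntidiag d ↔ e.degree = d := by
  simp [Finset.mem_finsuppAntidiag, Finsupp.degree_eq_sum]

variable (σ R d) in
/-- The basis of the module of forms of degree `d` given by the monomials. It is indexed by the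
finite set of exponent vectors with sum `d`, so that matrices in this basis have determinants. -/
noncomputable def monomialBasis :
    Module.Basis ((Finset.univ : Finset σ).finsuppAntidiag d) R (homogeneousSubmodule σ R d) :=
  ((basisRestrictSupport R {e : σ →₀ ℕ | e.degree = d}).map (LinearEquiv.ofEq _ _
    (homogeneousSubmodule_eq_finsupp_supported σ R d).symm)).reindex
      (Equiv.subtypeEquivRight fun _ => mem_finsuppAntidiag_univ.symm)

theorem monomialBasis_repr_apply (p : homogeneousSubmodule σ R d)
    (e : (Finset.univ : Finset σ).finsuppAntidiag d) :
    (monomialBasis σ R d).repr p e = coeff e.1 p.1 :=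
  rfl

theorem coe_monomialBasis (e : (Finset.univ : Finset σ).finsuppAntidiag d) :
    (monomialBasis σ R d e : MvPolynomial σ R) = monomial e.1 1 := by
  have he : monomial e.1 1 ∈ homogeneousSubmodule σ R d :=
    isHomogeneous_monomial 1 (mem_finsuppAntidiag_univ.1 e.2)
  have hrepr : (monomialBasis σ R d).repr ⟨monomial e.1 1, he⟩ = Finsupp.single e 1 := by
    ext f
    rw [monomialBasis_repr_apply, coeff_monomial, Finsupp.single_apply]
    simp only [Subtype.ext_iff]
  exact congrArg Subtype.val ((monomialBasis σ R d).apply_eq_iff.2 hrepr)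

end MonomialBasis

section SymPow

open scoped Matrix

variable {R S K : Type*} [CommRing R] [CommRing S] [Field K] {m d : ℕ}

theorem coe_symPow (u : Matrix (Fin m) (Fin m) R) (p : homogeneousSubmodule (Fin m) R d) :
    (symPow m d u p : MvPolynomial (Fin m) R) = bind₁ uᵀ.toMvPolynomial p.1 := by
  simp only [symPow, C_mul_X_eq_monomial]
  rfl

variable (R m d) in
/-- `S^d` as a multiplicative map from matrices to endomorphisms of the module of forms of
degree `d`. -/
noncomputable def symPowHom :
    Matrix (Fin m) (Fin m) R →* Module.End R (homogeneousSubmodule (Fin m) R d) where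
  toFun := symPow m d
  map_one' := by ext1 p; apply Subtype.ext; simp [coe_symPow]
  map_mul' u v := by
    ext1 p
    apply Subtype.ext
    simp only [Module.End.mul_apply, coe_symPow, Matrix.transpose_mul, bind₁_bind₁,
      ← Matrix.toMvPolynomial_mul]

theorem toMatrix_symPow_apply (u : Matrix (Fin m) (Fin m) R)
    (e f : (Finset.univ : Finset (Fin m)).finsuppAntidiag d) :
    LinearMap.toMatrix (monomialBasis (Fin m) R d) (monomialBasis (Fin m) R d) (symPow m d u) e f =
      coeff e.1 (bind₁ uᵀ.toMvPolynomial (monomial f.1 1)) := by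
  rw [LinearMap.toMatrix_apply, monomialBasis_repr_apply, coe_symPow, coe_monomialBasis]

theorem det_symPow_map (φ : R →+* S) (u : Matrix (Fin m) (Fin m) R) :
    LinearMap.det (symPow m d (u.map φ)) = φ (LinearMap.det (symPow m d u)) := by
  have hφ : (uᵀ.map φ).toMvPolynomial = fun i => map φ (uᵀ.toMvPolynomial i) := by
    ext1 i
    exact Matrix.toMvPolynomial_map φ _ i
  rw [← LinearMap.det_toMatrix (monomialBasis (Fin m) R d),
    ← LinearMap.det_toMatrix (monomialBasis (Fin m) S d), RingHom.map_det]
  congr 1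
  ext e f
  rw [RingHom.mapMatrix_apply, Matrix.map_apply, toMatrix_symPow_apply, toMatrix_symPow_apply,
    ← coeff_map, map_bind₁, map_monomial, φ.map_one, ← Matrix.transpose_map, hφ]

theorem symPow_diagonal_monomialBasis (D : Fin m → R)
    (e : (Finset.univ : Finset (Fin m)).finsuppAntidiag d) :
    symPow m d (Matrix.diagonal D) (monomialBasis (Fin m) R d e) =
      (∏ i, D i ^ e.1 i) • monomialBasis (Fin m) R d e := by
  have hX : (Matrix.diagonal D).toMvPolynomial = fun i => C (D i) * X i := by
    ext1 i
    simp [Matrix.toMvPolynomial, Matrix.diagonal_apply, apply_ite, C_mul_X_eq_monomial]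
  apply Subtype.ext
  rw [coe_symPow, Submodule.coe_smul, coe_monomialBasis, Matrix.diagonal_transpose, hX,
    bind₁, aeval_monomial, Finsupp.prod_pow, smul_eq_C_mul, monomial_eq, Finsupp.prod_pow]
  simp only [mul_pow, Finset.prod_mul_distrib, map_prod, map_pow, map_one, one_mul]

theorem det_symPow_diagonal (D : Fin m → R) :
    LinearMap.det (symPow m d (Matrix.diagonal D)) =
      (Matrix.diagonal D).det ^ ((m + d - 1).choose m) := by
  rw [det_eq_prod_of_apply_basis (monomialBasis (Fin m) R d) (symPow_diagonal_monomialBasis D),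
    Matrix.det_diagonal, Finset.prod_comm, ← Finset.prod_pow]
  refine Finset.prod_congr rfl fun i _ => ?_
  rw [Finset.prod_pow_eq_pow_sum, Finset.sum_coe_sort _ fun e : Fin m →₀ ℕ => e i,
    sum_finsuppAntidiag_apply (Finset.mem_univ i), Finset.card_fin]

theorem det_symPow_of_field [Nontrivial Kˣ] (u : Matrix (Fin m) (Fin m) K) :
    LinearMap.det (symPow m d u) = u.det ^ ((m + d - 1).choose m) := by
  have h : LinearMap.det.comp (symPowHom K m d) =
      (powMonoidHom ((m + d - 1).choose m)).comp Matrix.detMonoidHom :=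
    monoidHom_ext_diagonal det_symPow_diagonal
  exact DFunLike.congr_fun h u

theorem det_symPow_mvPolynomialX :
    LinearMap.det (symPow m d (Matrix.mvPolynomialX (Fin m) (Fin m) ℤ)) =
      (Matrix.mvPolynomialX (Fin m) (Fin m) ℤ).det ^ ((m + d - 1).choose m) := by
  let A := MvPolynomial (Fin m × Fin m) ℤ
  have : Nontrivial (FractionRing A)ˣ := ⟨-1, 1, by norm_num [Units.ext_iff]⟩
  apply IsFractionRing.injective A (FractionRing A)
  rw [← det_symPow_map, det_symPow_of_field, map_pow, RingHom.map_det, RingHom.mapMatrix_apply]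

end SymPow

set_option synthInstance.maxHeartbeats 1000000 in
set_option maxHeartbeats 1000000 in
/-- **Determinant of a symmetric power** (final corollary of the paper).
For a commutative ring `R`, `m ≥ 1`, `d ≥ 0` and an `m × m` matrix `u` over `R`,
the determinant of the endomorphism `S^d(u)` of the module of degree-`d` homogeneous
polynomials in `m` variables equals `(det u) ^ C(m+d-1, m)`. -/
theorem det_symPow {R : Type*} [CommRing R] (m d : ℕ) (hm : 1 ≤ m)
    (u : Matrix (Fin m) (Fin m) R) :
    LinearMap.det (symPow m d u) = u.det ^ ((m + d - 1).choose m) := by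
  let φ : MvPolynomial (Fin m × Fin m) ℤ →+* R :=
    eval₂Hom (Int.castRingHom R) fun p => u p.1 p.2
  have hu : (Matrix.mvPolynomialX (Fin m) (Fin m) ℤ).map φ = u :=
    Matrix.mvPolynomialX_map_eval₂ (Int.castRingHom R) u
  rw [← hu, det_symPow_map, det_symPow_mvPolynomialX, map_pow, RingHom.map_det,
    RingHom.mapMatrix_apply]
end
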